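/- arXiv:1801.02232 — 5 statements merged into one kernel-verified Lean document; each statement's English description precedes it below -/
import Mathlib

section
/- Let m ≥ 1 be an integer with m ≠ 3 such that the odd part of m^2 + 16 is squarefree, let θ be a root of P_m(x) = x^4 - m x^3 - 6 x^2 + m x + 1, and let K = ℚ(θ). If m is odd, then 2 divides the index I(α) = [O_K : ℤ[α]] for every α ∈ O_K that generates K over ℚ. -/
/-!
The prime `2` has exactly two primes of `𝓞 K` above it, both with residue field `𝔽₄`. As `𝔽₂[X]` has
only one irreducible quadratic, the algebra `𝔽₄ × 𝔽₄` is not generated by a single element over `𝔽₂`;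
but if `[𝓞 K : ℤ[α]]` were odd, the image of `α` would generate it.

To see the two primes, put `a = θ - θ⁻¹`, so that `a (a - m) = 4`. Neither `(2, a)` nor `(2, a - m)`
is the unit ideal: otherwise `b = (a - m) / 2` or `b = a / 2` would be an algebraic integer with
`2 b² ± m b - 2 = 0`, which `no_integral_root` excludes for `m` odd and `m ≠ ±3`.
Choose maximal ideals `P₁ ∋ 2, a` and `P₂ ∋ 2, a - m`; they are coprime because `m` is odd.
From `θ² - a θ - 1 = 0` the element `θ` is a root of `x² + x + 1` modulo `P₂`. The element
`η = (θ - 1) / (θ + 1)` is another root of `P_m`, with `η² - (m - a) η - 1 = 0`, so `η` is a root of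
`x² + x + 1` modulo `P₁`. Both residue fields thus have at least four elements, while
`N(P₁) N(P₂)` divides `N(2) = 2 ^ [K : ℚ] ≤ 16`. So both have exactly four elements.
-/

open Polynomial IntermediateField NumberField

noncomputable def Pm (m : ℤ) : Polynomial ℚ :=
  X ^ 4 - C (m : ℚ) * X ^ 3 - 6 * X ^ 2 + C (m : ℚ) * X + 1

/-- The odd part of a natural number: `n` with all factors of 2 removed. -/
def oddPart (n : ℕ) : ℕ := n / 2 ^ (n.factorization 2)

/-- The index `[𝓞 K : ℤ[α]]` of the order generated by `α` in the ring of integers. -/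
noncomputable def orderIndex (K : Type*) [Field K] [NumberField K] (α : 𝓞 K) : ℕ :=
  (Algebra.adjoin ℤ {α}).toSubring.toAddSubgroup.index

/-- By Gauss's lemma the integral minimal polynomial of `b` divides `2 X² + n X - 2`: degree two is
excluded since `n` is odd, and degree one since an integer root forces `n ∈ {0, ±3}`. -/
lemma no_integral_root {K : Type} [Field K] [NumberField K] (b : 𝓞 K) (n : ℤ) (hn : Odd n)
    (h3 : n ≠ 3) (h3' : n ≠ -3) (hb : 2 * b ^ 2 + n * b - 2 = 0) : False := by
  have hint : IsIntegral ℤ b := RingOfIntegers.isIntegral b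
  have hdvd : minpoly ℤ b ∣ (C 2 * X ^ 2 + C n * X + C (-2) : ℤ[X]) := by
    apply minpoly.isIntegrallyClosed_dvd hint
    simp only [map_add, map_mul, map_pow, aeval_X, aeval_C]
    simp only [eq_intCast]
    push_cast
    linear_combination hb
  have hdeg : (C 2 * X ^ 2 + C n * X + C (-2) : ℤ[X]).natDegree = 2 :=
    natDegree_quadratic (by norm_num)
  have hne : (C 2 * X ^ 2 + C n * X + C (-2) : ℤ[X]) ≠ 0 := by
    intro h; rw [h] at hdeg; simp at hdeg
  have hmon := minpoly.monic hint
  have hpos := minpoly.natDegree_pos hint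
  obtain ⟨r, hr⟩ := hdvd
  have hr0 : r ≠ 0 := by rintro rfl; exact hne (by simpa using hr)
  have hsum : (minpoly ℤ b).natDegree + r.natDegree = 2 := by
    rw [← natDegree_mul hmon.ne_zero hr0, ← hr, hdeg]
  have hcases : (minpoly ℤ b).natDegree = 1 ∨ (minpoly ℤ b).natDegree = 2 := by omega
  rcases hcases with h1 | h2
  · have hq := hmon.eq_X_add_C h1
    set c := (minpoly ℤ b).coeff 0
    have he := congrArg (eval (-c)) hr
    rw [hq] at he
    simp only [eval_add, eval_mul, eval_pow, eval_X, eval_C] at he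
    have hc : c * (2 * c - n) = 2 := by linarith
    have hcd : c ∣ 2 := ⟨_, hc.symm⟩
    have hle := Int.le_of_dvd (by norm_num) hcd
    have hge := Int.le_of_dvd (by norm_num) ((neg_dvd).2 hcd)
    obtain ⟨k, hk⟩ := hn
    have : -2 ≤ c := by linarith
    interval_cases c <;> omega
  · have hr' : r.natDegree = 0 := by omega
    obtain ⟨t, rfl⟩ := natDegree_eq_zero.1 hr'
    have e2 := congrArg (fun p => coeff p 2) hr
    have e1 := congrArg (fun p => coeff p 1) hr
    have hl : (minpoly ℤ b).coeff 2 = 1 := by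
      have := hmon.coeff_natDegree
      rwa [h2] at this
    simp [-eq_intCast, -map_neg, coeff_C, hl] at e2 e1
    obtain ⟨k, hk⟩ := hn
    rw [← e2] at e1
    omega

/-- Two maps onto `𝔽₄`-like fields separated by `a` cannot both be controlled by one element `α`:
the values of `α` avoid `{0, 1}`, hence are roots of `x² + x + 1`, so that `ℤ[α]` maps into the
span of `1` and `α`, where no element maps to `(0, 1)`. -/
lemma not_generated {R k₁ k₂ : Type} [CommRing R] [Field k₁] [Field k₂]
    (f₁ : R →+* k₁) (f₂ : R →+* k₂) (h₁ : (2 : k₁) = 0) (h₂ : (2 : k₂) = 0)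
    (hF₁ : ∀ x : k₁, x ^ 4 = x) (hF₂ : ∀ x : k₂, x ^ 4 = x)
    (a u v α : R) (ha₁ : f₁ a = 0) (ha₂ : f₂ a = 1)
    (hu : f₁ u ^ 2 + f₁ u + 1 = 0) (hv : f₂ v ^ 2 + f₂ v + 1 = 0)
    (hα : ∀ x : R, ∃ s ∈ Algebra.adjoin ℤ {α}, ∃ y, x = s + 2 * y) : False := by
  have key : ∀ {k : Type} [Field k] (f : R →+* k), (2 : k) = 0 → (∀ x : k, x ^ 4 = x) →
      ∀ w : R, f w ^ 2 + f w + 1 = 0 →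
      (f α ≠ 0 ∧ f α ≠ 1) ∧ f α ^ 2 + f α + 1 = 0 := by
    intro k _ f h hF w hw
    have hne : ¬ (f α = 0 ∨ f α = 1) := by
      intro h01
      have hS : ∀ s ∈ Algebra.adjoin ℤ {α}, f s = 0 ∨ f s = 1 := by
        intro s hs
        induction hs using Algebra.adjoin_induction with
        | mem x hx => rw [Set.mem_singleton_iff.1 hx]; exact h01
        | algebraMap r =>
          simp only [eq_intCast, map_intCast]
          rcases Int.even_or_odd' r with ⟨c, rfl | rfl⟩ <;> simp [h]
        | add x y _ _ hx hy =>
          rcases hx with hx | hx <;> rcases hy with hy | hy <;> simp only [map_add, hx, hy]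
          · simp
          · simp
          · simp
          · left; linear_combination h
        | mul x y _ _ hx hy =>
          rcases hx with hx | hx <;> rcases hy with hy | hy <;> simp [hx, hy]
      obtain ⟨s, hs, y, hy⟩ := hα w
      have hws : f w = f s := by rw [hy, map_add, map_mul, map_ofNat, h]; simp
      rw [hws] at hw
      rcases hS s hs with h' | h' <;> rw [h'] at hw
      · simp at hw
      · exact one_ne_zero (by linear_combination hw - h : (1 : k) = 0)
    push Not at hne
    refine ⟨hne, ?_⟩
    have h0 : f α * ((f α - 1) * (f α ^ 2 + f α + 1)) = 0 := by
      linear_combination hF (f α)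
    exact ((mul_eq_zero.1 ((mul_eq_zero.1 h0).resolve_left hne.1)).resolve_left
      (sub_ne_zero.2 hne.2))
  obtain ⟨⟨hne0, hne1⟩, hq₁⟩ := key f₁ h₁ hF₁ u hu
  obtain ⟨-, hq₂⟩ := key f₂ h₂ hF₂ v hv
  have hS : ∀ s ∈ Algebra.adjoin ℤ {α}, ∃ c d : ℤ,
      f₁ s = c + d * f₁ α ∧ f₂ s = c + d * f₂ α := by
    intro s hs
    induction hs using Algebra.adjoin_induction with
    | mem x hx => rw [Set.mem_singleton_iff.1 hx]; exact ⟨0, 1, by simp, by simp⟩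
    | algebraMap r => exact ⟨r, 0, by simp, by simp⟩
    | add x y _ _ hx hy =>
      obtain ⟨c, d, e₁, e₂⟩ := hx
      obtain ⟨c', d', e₁', e₂'⟩ := hy
      refine ⟨c + c', d + d', ?_, ?_⟩
      · push_cast; rw [map_add, e₁, e₁']; ring
      · push_cast; rw [map_add, e₂, e₂']; ring
    | mul x y _ _ hx hy =>
      obtain ⟨c, d, e₁, e₂⟩ := hx
      obtain ⟨c', d', e₁', e₂'⟩ := hy
      refine ⟨c * c' - d * d', c * d' + c' * d - d * d', ?_, ?_⟩
      · push_cast; rw [map_mul, e₁, e₁']; linear_combination (d * d' : k₁) * hq₁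
      · push_cast; rw [map_mul, e₂, e₂']; linear_combination (d * d' : k₂) * hq₂
  obtain ⟨s, hs, y, hy⟩ := hα a
  obtain ⟨c, d, e₁, e₂⟩ := hS s hs
  have hs₁ : f₁ s = 0 := by rw [← ha₁, hy, map_add, map_mul, map_ofNat, h₁]; simp
  have hs₂ : f₂ s = 1 := by rw [← ha₂, hy, map_add, map_mul, map_ofNat, h₂]; simp
  rw [hs₁] at e₁
  rw [hs₂] at e₂
  rcases Int.even_or_odd' c with ⟨c', rfl | rfl⟩ <;>
    rcases Int.even_or_odd' d with ⟨d', rfl | rfl⟩ <;>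
    push_cast at e₁ e₂ <;> simp only [h₁, h₂, zero_mul, zero_add, one_mul] at e₁ e₂
  · simp at e₂
  · exact hne0 e₁.symm
  · simp at e₁
  · exact hne1 (by linear_combination -h₁ - e₁)

lemma four_le_card {k : Type} [Field k] [Finite k] (h : (2 : k) = 0) (x : k)
    (hx : x ^ 2 + x + 1 = 0) : 4 ≤ Nat.card k := by
  classical
  have := Fintype.ofFinite k
  have h0 : x ≠ 0 := by rintro rfl; simp at hx
  have h1 : x ≠ 1 := by
    rintro rfl
    exact one_ne_zero (by linear_combination hx - h : (1 : k) = 0)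
  have h2 : x + 1 ≠ 0 := fun h' => one_ne_zero (by linear_combination hx - x * h' : (1 : k) = 0)
  have hc : ({0, 1, x, x + 1} : Finset k).card = 4 := by
    rw [Finset.card_insert_of_notMem, Finset.card_insert_of_notMem, Finset.card_insert_of_notMem,
      Finset.card_singleton]
    · simp
    · simp [h1.symm, h0]
    · simp [h0.symm, h2.symm]
  rw [Nat.card_eq_fintype_card, ← hc]
  exact Finset.card_le_univ _

/-- If `2`, `a` generate the unit ideal, then `a` is invertible modulo `2`, so `2 ∣ c` whenever
`a c = 4`; writing `c = 2 b` gives `2 b² + n b - 2 = 0`. -/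
lemma span_ne_top {K : Type} [Field K] [NumberField K] (a c : 𝓞 K) (n : ℤ) (hn : Odd n)
    (h3 : n ≠ 3) (h3' : n ≠ -3) (hac : a * c = 4) (hd : a = c + n) :
    Ideal.span {2, a} ≠ ⊤ := by
  intro h
  rw [Ideal.eq_top_iff_one, Ideal.mem_span_pair] at h
  obtain ⟨x, y, hxy⟩ := h
  have hc : c = 2 * (x * c + 2 * y) := by linear_combination -c * hxy + y * hac
  generalize x * c + 2 * y = b at hc
  apply no_integral_root b n hn h3 h3'
  have h2 : (2 : 𝓞 K) ≠ 0 := two_ne_zero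
  apply mul_left_cancel₀ h2
  rw [hd, hc] at hac
  linear_combination hac

/-- The integral elements that carry the argument: `a = θ - θ⁻¹`, `θ` itself, and the root
`η = (θ - 1) / (θ + 1)` of `Pm m`. -/
lemma exists_elements (m : ℤ) {K : Type} [Field K] [NumberField K] (θ : K)
    (hθ : Polynomial.aeval θ (Pm m) = 0) :
    ∃ a t η : 𝓞 K, a * (a - m) = 4 ∧ t ^ 2 - a * t - 1 = 0 ∧ η ^ 2 - (m - a) * η - 1 = 0 := by
  have hP : θ ^ 4 - m * θ ^ 3 - 6 * θ ^ 2 + m * θ + 1 = 0 := by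
    simpa [Pm, map_ofNat] using hθ
  have hint : ∀ x : K, x ^ 4 - m * x ^ 3 - 6 * x ^ 2 + m * x + 1 = 0 → IsIntegral ℤ x := by
    intro x hx
    refine ⟨X ^ 4 - C m * X ^ 3 - C 6 * X ^ 2 + C m * X + C 1, by monicity!, ?_⟩
    simpa [-eq_intCast] using hx
  have h0 : θ ≠ 0 := by rintro rfl; simp at hP
  have h1 : θ + 1 ≠ 0 := by
    intro h
    have : θ = -1 := by linear_combination h
    rw [this] at hP
    have : (-4 : K) = 0 := by linear_combination hP
    norm_num at this
  set y : K := (θ - 1) / (θ + 1) with hy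
  have hyθ : y * (θ + 1) = θ - 1 := by rw [hy]; field_simp
  have hyP : y ^ 4 - m * y ^ 3 - 6 * y ^ 2 + m * y + 1 = 0 := by
    rw [hy]; field_simp; linear_combination -4 * hP
  obtain ⟨t, htθ⟩ : ∃ t : 𝓞 K, (t : K) = θ := ⟨⟨θ, hint θ hP⟩, rfl⟩
  obtain ⟨η, hηy⟩ : ∃ η : 𝓞 K, (η : K) = y := ⟨⟨y, hint y hyP⟩, rfl⟩
  -- `-(θ³ - m θ² - 6 θ + m)` is the inverse of `θ`.
  let a : 𝓞 K := t + (t ^ 3 - m * t ^ 2 - 6 * t + m)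
  have ht : t ^ 4 - m * t ^ 3 - 6 * t ^ 2 + m * t + 1 = 0 := by
    apply RingOfIntegers.ext; simpa [htθ, map_ofNat] using hP
  have hta : t ^ 2 - a * t - 1 = 0 := by simp only [a]; linear_combination -ht
  have ht0 : t ≠ 0 := by
    intro h; rw [h] at ht; simp at ht
  have haa : a * (a - m) = 4 := by
    apply mul_left_cancel₀ (pow_ne_zero 2 ht0)
    linear_combination ht + (-(t ^ 2 - 1) + m * t - a * t) * hta
  have hηt : η * (t + 1) = t - 1 := by
    apply RingOfIntegers.ext; simpa [htθ, hηy] using hyθ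
  have ht1 : t + 1 ≠ 0 := by
    intro h
    apply h1
    simpa [htθ] using congrArg (fun z : 𝓞 K => (z : K)) h
  refine ⟨a, t, η, haa, hta, ?_⟩
  apply mul_left_cancel₀ (pow_ne_zero 2 ht1)
  linear_combination (η * (t + 1) + (t - 1) - (m - a) * (t + 1)) * hηt - (m - a) * hta + t * haa

theorem stmt_3 (m : ℤ) (hm : 1 ≤ m) (hm3 : m ≠ 3)
    (hsf : Squarefree (oddPart ((m ^ 2 + 16).natAbs)))
    (hodd : Odd m)
    (K : Type) [Field K] [NumberField K] (θ : K)
    (hθ : Polynomial.aeval θ (Pm m) = 0)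
    (hgen : IntermediateField.adjoin ℚ {θ} = ⊤) :
    ∀ α : 𝓞 K, IntermediateField.adjoin ℚ {(α : K)} = ⊤ →
      2 ∣ orderIndex K α := by
  intro α _
  by_contra hidx
  obtain ⟨a, t, η, haa, hta, hη⟩ := exists_elements m θ hθ
  have hmon : (Pm m).Monic := by unfold Pm; monicity!
  have hPdeg : (Pm m).natDegree ≤ 4 := by unfold Pm; compute_degree
  have hrank : Module.finrank ℚ K ≤ 4 := by
    have hi : IsIntegral ℚ θ := ⟨Pm m, hmon, hθ⟩
    rw [← IntermediateField.finrank_top', ← hgen, IntermediateField.adjoin.finrank hi]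
    exact (natDegree_le_of_dvd (minpoly.dvd ℚ θ hθ) hmon.ne_zero).trans hPdeg
  obtain ⟨P₁, hP₁, hle₁⟩ := Ideal.exists_le_maximal _
    (span_ne_top a (a - m) m hodd hm3 (by omega) haa (by ring))
  obtain ⟨P₂, hP₂, hle₂⟩ := Ideal.exists_le_maximal _
    (span_ne_top (a - (m : 𝓞 K)) a (-m) hodd.neg (by omega) (by omega) (by rw [mul_comm]; exact haa)
      (by push_cast; ring))
  have h21 : (2 : 𝓞 K) ∈ P₁ := hle₁ (Ideal.subset_span (by simp))
  have h22 : (2 : 𝓞 K) ∈ P₂ := hle₂ (Ideal.subset_span (by simp))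
  have ha1 : a ∈ P₁ := hle₁ (Ideal.subset_span (by simp))
  have ha2 : a - (m : 𝓞 K) ∈ P₂ := hle₂ (Ideal.subset_span (by simp))
  let := Ideal.Quotient.field P₁
  let := Ideal.Quotient.field P₂
  let f₁ := Ideal.Quotient.mk P₁
  let f₂ := Ideal.Quotient.mk P₂
  have e₁ : (2 : 𝓞 K ⧸ P₁) = 0 := by
    rw [← map_ofNat f₁ 2]; exact Ideal.Quotient.eq_zero_iff_mem.2 h21
  have e₂ : (2 : 𝓞 K ⧸ P₂) = 0 := by
    rw [← map_ofNat f₂ 2]; exact Ideal.Quotient.eq_zero_iff_mem.2 h22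
  have fm₁ : (m : 𝓞 K ⧸ P₁) = 1 := by
    obtain ⟨c, rfl⟩ := hodd; push_cast; rw [e₁]; simp
  have fm₂ : (m : 𝓞 K ⧸ P₂) = 1 := by
    obtain ⟨c, rfl⟩ := hodd; push_cast; rw [e₂]; simp
  have fa₁ : f₁ a = 0 := Ideal.Quotient.eq_zero_iff_mem.2 ha1
  have fa₂ : f₂ a = 1 := by
    have : f₂ (a - (m : 𝓞 K)) = 0 := Ideal.Quotient.eq_zero_iff_mem.2 ha2
    rw [map_sub, map_intCast, fm₂] at this
    linear_combination this
  have hu : f₁ η ^ 2 + f₁ η + 1 = 0 := by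
    have := congrArg f₁ hη
    simp only [map_sub, map_mul, map_pow, map_one, map_zero, map_intCast, fm₁, fa₁] at this
    linear_combination this + (f₁ η + 1) * e₁
  have hv : f₂ t ^ 2 + f₂ t + 1 = 0 := by
    have := congrArg f₂ hta
    simp only [map_sub, map_mul, map_pow, map_one, map_zero, fa₂] at this
    linear_combination this + (f₂ t + 1) * e₂
  have hne : P₁ ≠ P₂ := by
    intro h
    have h' : f₂ a = 0 := Ideal.Quotient.eq_zero_iff_mem.2 (h ▸ ha1)
    exact one_ne_zero (fa₂.symm.trans h')
  have hP₁0 : P₁ ≠ ⊥ := by rintro rfl; simp at h21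
  have hP₂0 : P₂ ≠ ⊥ := by rintro rfl; simp at h22
  have : Finite (𝓞 K ⧸ P₁) := Ideal.finiteQuotientOfFreeOfNeBot P₁ hP₁0
  have : Finite (𝓞 K ⧸ P₂) := Ideal.finiteQuotientOfFreeOfNeBot P₂ hP₂0
  have hc₁ : 4 ≤ Nat.card (𝓞 K ⧸ P₁) := four_le_card e₁ _ hu
  have hc₂ : 4 ≤ Nat.card (𝓞 K ⧸ P₂) := four_le_card e₂ _ hv
  have hprod : Nat.card (𝓞 K ⧸ P₁) * Nat.card (𝓞 K ⧸ P₂) ≤ 16 := by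
    have hcop : P₁ * P₂ = P₁ ⊓ P₂ :=
      Ideal.mul_eq_inf_of_coprime (hP₁.coprime_of_ne hP₂ hne)
    have hle : Ideal.span {(2 : 𝓞 K)} ≤ P₁ * P₂ := by
      rw [hcop, Ideal.span_singleton_le_iff_mem]
      exact ⟨h21, h22⟩
    have hd := Ideal.absNorm_dvd_absNorm_of_le hle
    have hn2 : Ideal.absNorm (Ideal.span {(2 : 𝓞 K)}) = 2 ^ Module.finrank ℚ K := by
      have h := Algebra.norm_algebraMap_of_basis (RingOfIntegers.basis K) (2 : ℤ)
      rw [Ideal.absNorm_span_singleton]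
      rw [show (2 : 𝓞 K) = algebraMap ℤ (𝓞 K) 2 by simp, h, Int.natAbs_pow,
        ← Module.finrank_eq_card_basis (RingOfIntegers.basis K), RingOfIntegers.rank]
      rfl
    rw [map_mul, hn2] at hd
    exact (Nat.le_of_dvd (by positivity) hd).trans
      ((Nat.pow_le_pow_right (by norm_num) hrank).trans (by norm_num))
  have hF₁ : ∀ x : 𝓞 K ⧸ P₁, x ^ 4 = x := by
    have := Fintype.ofFinite (𝓞 K ⧸ P₁)
    have : Fintype.card (𝓞 K ⧸ P₁) = 4 := by
      rw [← Nat.card_eq_fintype_card]; nlinarith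
    intro x; rw [← this]; exact FiniteField.pow_card x
  have hF₂ : ∀ x : 𝓞 K ⧸ P₂, x ^ 4 = x := by
    have := Fintype.ofFinite (𝓞 K ⧸ P₂)
    have : Fintype.card (𝓞 K ⧸ P₂) = 4 := by
      rw [← Nat.card_eq_fintype_card]; nlinarith
    intro x; rw [← this]; exact FiniteField.pow_card x
  refine not_generated f₁ f₂ e₁ e₂ hF₁ hF₂ a η t α fa₁ fa₂ hu hv fun x => ?_
  -- The odd index `2 k + 1` kills the quotient by `ℤ[α]`, so `x ≡ (2 k + 1) x` modulo `2`.
  have hmem : orderIndex K α • x ∈ (Algebra.adjoin ℤ {α}).toSubring.toAddSubgroup :=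
    AddSubgroup.nsmul_index_mem _ x
  obtain ⟨k, hk⟩ : Odd (orderIndex K α) := by
    rw [← Nat.not_even_iff_odd, even_iff_two_dvd]; exact hidx
  refine ⟨_, hmem, -(k * x), ?_⟩
  rw [hk, nsmul_eq_mul]
  push_cast
  ring
end

section
/- Let m be a positive odd integer with m ≠ 3 and m^2 + 16 squarefree, let θ be a root of P_m(x) = x^4 - m x^3 - 6 x^2 + m x + 1, and let K = ℚ(θ). Then the index of ℤ[θ] in O_K equals 2, i.e., [O_K : ℤ[θ]] = 2. -/
open Polynomial IntermediateField NumberField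

/-!
Write `D = m ^ 2 + 16`, an odd squarefree integer greater than `1`, and
`P = X ^ 4 - m X ^ 3 - 6 X ^ 2 + m X + 1`.

*Odd primes.* The element `4θ - m` is a root of `Y ^ 4 - 6D Y ^ 2 - 8mD Y - (3m ^ 2 - 16)D`, which
is Eisenstein at every prime `p ∣ D`. This gives irreducibility, hence `minpoly ℤ θ = P`, and it
shows that `ℤ[4θ - m]`, and therefore `ℤ[θ]`, is maximal at each such `p`
(`mem_of_prime_smul_mem`).

*A bound for the index.* Since the conductor of `ℤ[θ]` times the different is generated by `P'(θ)`,
we have `P'(θ) 𝓞 ⊆ ℤ[θ]`. A Bézout identity `P' g ≡ 2D mod P` then gives `2D 𝓞 ⊆ ℤ[θ]`, and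
maximality at the primes dividing `D` improves this to `2 𝓞 ⊆ ℤ[θ]` (`two_mul_mem`).

*The prime 2.* Modulo `2`, `P = (X + 1) ^ 2 (X ^ 2 + X + 1)` and `P' = (X + 1) ^ 2`. The element
`w = (1 + θ ^ 3) / 2` is integral and not in `ℤ[θ]`. If `z = h(θ) / 2` is integral, then
`P'(θ) z ∈ ℤ[θ]` forces `X ^ 2 + X + 1 ∣ h` modulo `2`, so modulo `ℤ[θ]` and `w` only
`(1 + θ + θ ^ 2) / 2` remains. Its integrality would make `θ + 1` coprime to `2`, although
`θ + 1` divides `4`; then `θ + 1` would be a unit, with inverse `q(θ) / 4` for a monic cubic `q`,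
contradicting `2 𝓞 ⊆ ℤ[θ]`. Hence `𝓞 = ℤ[θ] ∪ (w + ℤ[θ])`.
-/

/-! ### The two integer polynomials -/

/-- The polynomial `P_m` with integer coefficients. -/
noncomputable def Pint (m : ℤ) : ℤ[X] := X ^ 4 - C m * X ^ 3 - C 6 * X ^ 2 + C m * X + C 1

/-- The polynomial `256 P_m((Y + m) / 4)`, which is monic with root `4θ - m`. -/
noncomputable def Qint (m : ℤ) : ℤ[X] :=
  X ^ 4 - C (6 * (m ^ 2 + 16)) * X ^ 2 - C (8 * m * (m ^ 2 + 16)) * X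
    - C ((3 * m ^ 2 - 16) * (m ^ 2 + 16))

lemma Pint_natDegree (m : ℤ) : (Pint m).natDegree = 4 := by
  unfold Pint; compute_degree!

lemma Pint_monic (m : ℤ) : (Pint m).Monic := by
  unfold Pint; monicity!

lemma Qint_natDegree (m : ℤ) : (Qint m).natDegree = 4 := by
  unfold Qint; compute_degree!

lemma Qint_monic (m : ℤ) : (Qint m).Monic := by
  unfold Qint; monicity!

/-- If `p ∣ m ^ 2 + 16`, then `3m ^ 2 - 16 ≡ -64` modulo `p`, so the constant coefficient is
divisible by `p` exactly once. -/
lemma Qint_isEisensteinAt {m p : ℤ} (hodd : Odd m) (hsf : Squarefree (m ^ 2 + 16)) (hp : Prime p)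
    (hpD : p ∣ m ^ 2 + 16) : (Qint m).IsEisensteinAt (Ideal.span {p}) := by
  have h2 : ¬ p ∣ 2 := by
    intro h
    have h16 : p ∣ 16 := h.trans (by norm_num)
    have hpm : p ∣ m := hp.dvd_of_dvd_pow ((dvd_add_left h16).1 hpD)
    obtain ⟨k, rfl⟩ := hodd
    exact hp.not_isUnit (isUnit_of_dvd_one ((dvd_add_right (h.mul_right k)).1 hpm))
  refine ⟨?_, ?_, ?_⟩
  · rw [(Qint_monic m).leadingCoeff, Ideal.mem_span_singleton]
    exact fun h => hp.not_isUnit (isUnit_of_dvd_one h)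
  · intro n hn
    rw [Qint_natDegree] at hn
    rw [Ideal.mem_span_singleton]
    interval_cases n <;>
      simp [Qint, coeff_X, coeff_C, coeff_X_pow, -eq_intCast, -map_mul, -map_sub, -map_add,
        -map_pow] <;>
      exact hpD.mul_left _
  · rw [Ideal.span_singleton_pow, Ideal.mem_span_singleton]
    have h0 : (Qint m).coeff 0 = -((3 * m ^ 2 - 16) * (m ^ 2 + 16)) := by
      simp [Qint, coeff_X, coeff_C, coeff_X_pow, -eq_intCast, -map_mul, -map_sub, -map_add,
        -map_pow]
    rw [h0, dvd_neg]
    obtain ⟨e, he⟩ := hpD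
    intro h
    rw [he, pow_two, mul_left_comm, mul_dvd_mul_iff_left hp.ne_zero] at h
    rcases hp.dvd_or_dvd h with h | h
    · have h64 : p ∣ 2 ^ 6 := by
        have : (2 : ℤ) ^ 6 = 3 * (p * e) - (3 * m ^ 2 - 16) := by rw [← he]; ring
        rw [this]
        exact dvd_sub ((dvd_mul_right p e).mul_left 3) h
      exact h2 (hp.dvd_of_dvd_pow h64)
    · exact hp.not_isUnit (hsf p (by rw [he]; exact mul_dvd_mul_left p h))

/-! ### Coordinates in `ℤ[θ]` and minimal polynomials -/

section

variable {K : Type} [Field K] [NumberField K]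

/-- An irreducible monic integer polynomial is the minimal polynomial of each of its roots. -/
lemma minpoly_int_eq {R : Type*} [CommRing R] [IsDomain R] [CharZero R] {x : R} {f : ℤ[X]}
    (hf : f.Monic) (hirr : Irreducible f) (hx : aeval x f = 0) : minpoly ℤ x = f := by
  have hint : IsIntegral ℤ x := ⟨f, hf, hx⟩
  exact eq_of_monic_of_associated (minpoly.monic hint) hf
    ((minpoly.irreducible hint).associated_of_dvd hirr
      (minpoly.isIntegrallyClosed_dvd hint hx))

lemma exists_of_mem_adjoin {R : Type*} [CommRing R] {x : R} {m : ℤ}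
    (hx : x ^ 4 - m * x ^ 3 - 6 * x ^ 2 + m * x + 1 = 0) {y : R}
    (hy : y ∈ Algebra.adjoin ℤ {x}) :
    ∃ a b c d : ℤ, y = a + b * x + c * x ^ 2 + d * x ^ 3 := by
  induction hy using Algebra.adjoin_induction with
  | mem y hy =>
    rw [Set.mem_singleton_iff] at hy
    exact ⟨0, 1, 0, 0, by rw [hy]; push_cast; ring⟩
  | algebraMap r => exact ⟨r, 0, 0, 0, by simp⟩
  | add y z _ _ hy hz =>
    obtain ⟨a, b, c, d, rfl⟩ := hy
    obtain ⟨a', b', c', d', rfl⟩ := hz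
    exact ⟨a + a', b + b', c + c', d + d', by push_cast; ring⟩
  | mul y z _ _ hy hz =>
    -- It suffices to see that the span of `1, x, x ^ 2, x ^ 3` is stable under `x`.
    have key : ∀ u : R, (∃ a b c d : ℤ, u = a + b * x + c * x ^ 2 + d * x ^ 3) →
        ∃ a b c d : ℤ, x * u = a + b * x + c * x ^ 2 + d * x ^ 3 := by
      rintro u ⟨a, b, c, d, rfl⟩
      exact ⟨-d, a - m * d, b + 6 * d, c + m * d, by push_cast; linear_combination d * hx⟩
    obtain ⟨a, b, c, d, rfl⟩ := hy
    obtain ⟨a1, b1, c1, d1, h1⟩ := key z hz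
    obtain ⟨a2, b2, c2, d2, h2⟩ := key _ ⟨a1, b1, c1, d1, h1⟩
    obtain ⟨a3, b3, c3, d3, h3⟩ := key _ ⟨a2, b2, c2, d2, h2⟩
    obtain ⟨a0, b0, c0, d0, h0⟩ := hz
    refine ⟨a * a0 + b * a1 + c * a2 + d * a3, a * b0 + b * b1 + c * b2 + d * b3,
      a * c0 + b * c1 + c * c2 + d * c3, a * d0 + b * d1 + c * d2 + d * d3, ?_⟩
    push_cast
    linear_combination (a : R) * h0 + b * h1 + c * h2 + d * h3

lemma mem_adjoin_of_coords {R : Type*} [CommRing R] (x : R) (a b c d : ℤ) :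
    (a + b * x + c * x ^ 2 + d * x ^ 3 : R) ∈ Algebra.adjoin ℤ {x} := by
  have hx := Algebra.self_mem_adjoin_singleton ℤ x
  have hc (n : ℤ) : (n : R) ∈ Algebra.adjoin ℤ {x} := intCast_mem _ n
  exact add_mem (add_mem (add_mem (hc a) (mul_mem (hc b) hx)) (mul_mem (hc c) (pow_mem hx 2)))
    (mul_mem (hc d) (pow_mem hx 3))

/-- Coordinates with respect to `1, θ, θ ^ 2, θ ^ 3` are unique. -/
lemma coords_eq_zero {x : 𝓞 K} {m : ℤ} (hmin : minpoly ℤ x = Pint m) {a b c d : ℤ}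
    (h : (a + b * x + c * x ^ 2 + d * x ^ 3 : 𝓞 K) = 0) : a = 0 ∧ b = 0 ∧ c = 0 ∧ d = 0 := by
  have hf : (C a + C b * X + C c * X ^ 2 + C d * X ^ 3 : ℤ[X]) = 0 := by
    by_contra hne
    have h1 := minpoly.IsIntegrallyClosed.degree_le_of_ne_zero (s := x) hne
      (by simpa [-eq_intCast] using h)
    rw [hmin, degree_eq_natDegree (Pint_monic m).ne_zero, Pint_natDegree] at h1
    have h2 : (C a + C b * X + C c * X ^ 2 + C d * X ^ 3 : ℤ[X]).degree ≤ 3 := by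
      compute_degree
    exact absurd (h1.trans h2) (by decide)
  refine ⟨?_, ?_, ?_, ?_⟩
  · simpa [coeff_X, coeff_C, coeff_X_pow, -eq_intCast] using congrArg (coeff · 0) hf
  · simpa [coeff_X, coeff_C, coeff_X_pow, -eq_intCast] using congrArg (coeff · 1) hf
  · simpa [coeff_X, coeff_C, coeff_X_pow, -eq_intCast] using congrArg (coeff · 2) hf
  · simpa [coeff_X, coeff_C, coeff_X_pow, -eq_intCast] using congrArg (coeff · 3) hf

lemma coords_inj {x : 𝓞 K} {m : ℤ} (hmin : minpoly ℤ x = Pint m) {a b c d a' b' c' d' : ℤ}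
    (h : (a + b * x + c * x ^ 2 + d * x ^ 3 : 𝓞 K) = a' + b' * x + c' * x ^ 2 + d' * x ^ 3) :
    a = a' ∧ b = b' ∧ c = c' ∧ d = d' := by
  have := coords_eq_zero hmin (a := a - a') (b := b - b') (c := c - c') (d := d - d')
    (by push_cast; linear_combination h)
  omega

lemma adjoin_eq_top_of_generator {x : K} (h : IntermediateField.adjoin ℚ {x} = ⊤) :
    Algebra.adjoin ℚ {x} = ⊤ := by
  rw [← IntermediateField.adjoin_simple_toSubalgebra_of_isAlgebraic
    (Algebra.IsAlgebraic.isAlgebraic x), h, IntermediateField.top_toSubalgebra]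

lemma aeval_Qint {R : Type*} [CommRing R] {x : R} {m : ℤ}
    (hx : x ^ 4 - m * x ^ 3 - 6 * x ^ 2 + m * x + 1 = 0) :
    aeval (4 * x - m) (Qint m) = 0 := by
  simp only [Qint, aeval_def, eval₂_sub, eval₂_mul, eval₂_pow, eval₂_X, eval₂_C]
  simp only [eq_intCast]
  push_cast
  linear_combination 256 * hx

lemma adjoin_shift_eq_top {x : K} (h : Algebra.adjoin ℚ {x} = ⊤) (m : ℤ) :
    Algebra.adjoin ℚ {4 * x - (m : K)} = ⊤ := by
  rw [eq_top_iff, ← h, Algebra.adjoin_le_iff, Set.singleton_subset_iff]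
  have h1 := Algebra.self_mem_adjoin_singleton ℚ (4 * x - (m : K))
  have h2 := Subalgebra.smul_mem _ (add_mem h1 (intCast_mem _ m)) (1 / 4 : ℚ)
  rw [sub_add_cancel] at h2
  convert h2 using 1
  rw [Algebra.smul_def]
  simp

/-- If some prime divides `m ^ 2 + 16`, irreducibility of the Eisenstein polynomial shows that
`4θ - m`, hence `θ`, has degree `4`. -/
lemma minpoly_eq_Pint {m p : ℤ} (hodd : Odd m) (hsf : Squarefree (m ^ 2 + 16)) (hp : Prime p)
    (hpD : p ∣ m ^ 2 + 16) {x : 𝓞 K} (hx : x ^ 4 - m * x ^ 3 - 6 * x ^ 2 + m * x + 1 = 0)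
    (htop : Algebra.adjoin ℚ {(x : K)} = ⊤) : minpoly ℤ x = Pint m := by
  have hxK : (x : K) ^ 4 - m * (x : K) ^ 3 - 6 * (x : K) ^ 2 + m * (x : K) + 1 = 0 := by
    have := congrArg (algebraMap (𝓞 K) K) hx
    simpa only [map_add, map_sub, map_mul, map_pow, map_intCast, map_one, map_zero, map_ofNat]
      using this
  have hE := Qint_isEisensteinAt hodd hsf hp hpD
  have hQ : minpoly ℤ (4 * (x : K) - m) = Qint m :=
    minpoly_int_eq (Qint_monic m)
      (hE.irreducible ((Ideal.span_singleton_prime hp.ne_zero).2 hp) (Qint_monic m).isPrimitive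
        (by rw [Qint_natDegree]; norm_num)) (aeval_Qint hxK)
  have hφint : IsIntegral ℤ (4 * (x : K) - m) := ⟨Qint m, Qint_monic m, aeval_Qint hxK⟩
  have hxint : IsIntegral ℤ (x : K) := x.2
  have e1 := (PowerBasis.ofAdjoinEqTop (IsIntegral.tower_top (A := ℚ) hxint) htop).finrank
  have e2 := (PowerBasis.ofAdjoinEqTop (IsIntegral.tower_top (A := ℚ) hφint)
    (adjoin_shift_eq_top htop m)).finrank
  rw [PowerBasis.ofAdjoinEqTop_dim] at e1 e2
  rw [e1, minpoly.isIntegrallyClosed_eq_field_fractions' ℚ hxint,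
    minpoly.isIntegrallyClosed_eq_field_fractions' ℚ hφint, hQ,
    (minpoly.monic hxint).natDegree_map, (Qint_monic m).natDegree_map, Qint_natDegree] at e2
  rw [← minpoly.algebraMap_eq (B' := K) RingOfIntegers.coe_injective x]
  refine (eq_of_monic_of_dvd_of_natDegree_le (minpoly.monic hxint) (Pint_monic m)
    (minpoly.isIntegrallyClosed_dvd hxint ?_) ?_).symm
  · simp [Pint, map_ofNat]
    linear_combination hxK
  · rw [e2, Pint_natDegree]

/-! ### Maximality away from `2` -/

/-- `ℤ[θ]` is maximal at the primes dividing `m ^ 2 + 16`. -/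
lemma mem_of_prime_smul_mem {m p : ℤ} (hodd : Odd m) (hsf : Squarefree (m ^ 2 + 16))
    (hp : Prime p) (hpD : p ∣ m ^ 2 + 16) {x : 𝓞 K}
    (hx : x ^ 4 - m * x ^ 3 - 6 * x ^ 2 + m * x + 1 = 0)
    (htop : Algebra.adjoin ℚ {(x : K)} = ⊤) {z : 𝓞 K} (hz : p * z ∈ Algebra.adjoin ℤ {x}) :
    z ∈ Algebra.adjoin ℤ {x} := by
  have hxK : (x : K) ^ 4 - m * (x : K) ^ 3 - 6 * (x : K) ^ 2 + m * (x : K) + 1 = 0 := by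
    have := congrArg (algebraMap (𝓞 K) K) hx
    simpa only [map_add, map_sub, map_mul, map_pow, map_intCast, map_one, map_zero, map_ofNat]
      using this
  have hE := Qint_isEisensteinAt hodd hsf hp hpD
  have hQ : minpoly ℤ (4 * (x : K) - m) = Qint m :=
    minpoly_int_eq (Qint_monic m)
      (hE.irreducible ((Ideal.span_singleton_prime hp.ne_zero).2 hp) (Qint_monic m).isPrimitive
        (by rw [Qint_natDegree]; norm_num)) (aeval_Qint hxK)
  have hφint : IsIntegral ℤ (4 * (x : K) - m) := ⟨Qint m, Qint_monic m, aeval_Qint hxK⟩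
  have hcop : IsCoprime p 64 := by
    refine (hp.coprime_iff_not_dvd).2 fun h => ?_
    have h2 : p ∣ 2 := hp.dvd_of_dvd_pow (n := 6) (by simpa using h)
    have h16 : p ∣ 16 := h2.trans (by norm_num)
    have hpm : p ∣ m := hp.dvd_of_dvd_pow ((dvd_add_left h16).1 hpD)
    obtain ⟨k, rfl⟩ := hodd
    exact hp.not_isUnit (isUnit_of_dvd_one ((dvd_add_right (h2.mul_right k)).1 hpm))
  -- `64 ℤ[θ] ⊆ ℤ[4θ - m]`, since elements of `ℤ[θ]` are cubic in `θ = ((4θ - m) + m) / 4`.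
  obtain ⟨a, b, c, d, hco⟩ := exists_of_mem_adjoin hx hz
  have hcoK : (p : K) * (z : K) = a + b * (x : K) + c * (x : K) ^ 2 + d * (x : K) ^ 3 := by
    have := congrArg (algebraMap (𝓞 K) K) hco
    simpa only [map_add, map_mul, map_pow, map_intCast] using this
  have h64c : ((64 * z : 𝓞 K) : K) = 64 * (z : K) := by simp [map_ofNat]
  have h64p : p • (((64 * z : 𝓞 K)) : K) ∈ Algebra.adjoin ℤ {4 * (x : K) - m} := by
    have hφ := Algebra.self_mem_adjoin_singleton ℤ (4 * (x : K) - m)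
    have hc (n : ℤ) : (n : K) ∈ Algebra.adjoin ℤ {4 * (x : K) - m} := intCast_mem _ n
    have h4 := add_mem hφ (hc m)
    have : p • (((64 * z : 𝓞 K)) : K) = (64 * a : ℤ) + (16 * b : ℤ) * (4 * (x : K) - m + m)
        + (4 * c : ℤ) * (4 * (x : K) - m + m) ^ 2 + d * (4 * (x : K) - m + m) ^ 3 := by
      rw [zsmul_eq_mul, h64c]
      push_cast
      linear_combination 64 * hcoK
    rw [this]
    exact add_mem (add_mem (add_mem (hc _) (mul_mem (hc _) h4)) (mul_mem (hc _) (pow_mem h4 2)))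
      (mul_mem (hc _) (pow_mem h4 3))
  have h64 : (((64 * z : 𝓞 K)) : K) ∈ Algebra.adjoin ℤ {4 * (x : K) - m} :=
    mem_adjoin_of_smul_prime_smul_of_minpoly_isEisensteinAt
      (B := PowerBasis.ofAdjoinEqTop (IsIntegral.tower_top (A := ℚ) hφint)
        (adjoin_shift_eq_top htop m)) hp hφint (64 * z).2 h64p
      (by rw [PowerBasis.ofAdjoinEqTop_gen, hQ]; exact hE)
  have h64' : 64 * z ∈ Algebra.adjoin ℤ {x} := by
    have hle : Algebra.adjoin ℤ {4 * (x : K) - m} ≤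
        (Algebra.adjoin ℤ {x}).map (IsScalarTower.toAlgHom ℤ (𝓞 K) K) := by
      rw [Algebra.adjoin_le_iff, Set.singleton_subset_iff]
      refine ⟨4 * x - m, ?_, by simp [map_ofNat]⟩
      have h := mem_adjoin_of_coords x (-m) 4 0 0
      have heq : (4 * x - m : 𝓞 K) = (-m : ℤ) + (4 : ℤ) * x + (0 : ℤ) * x ^ 2 + (0 : ℤ) * x ^ 3 := by
        push_cast
        ring
      rw [heq]
      exact h
    obtain ⟨y, hy, hyz⟩ := hle h64
    have : y = 64 * z := RingOfIntegers.coe_injective hyz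
    exact this ▸ hy
  obtain ⟨r, s, hrs⟩ := hcop
  have hrs' : (r * p + s * 64 : 𝓞 K) = 1 := by exact_mod_cast congrArg (Int.cast : ℤ → 𝓞 K) hrs
  have : z = r * (p * z) + s * (64 * z) := by linear_combination (-z) * hrs'
  rw [this]
  exact add_mem (mul_mem (intCast_mem _ r) hz) (mul_mem (intCast_mem _ s) h64')

lemma mem_of_dvd_smul_mem {m : ℤ} (hodd : Odd m) (hsf : Squarefree (m ^ 2 + 16)) {x : 𝓞 K}
    (hx : x ^ 4 - m * x ^ 3 - 6 * x ^ 2 + m * x + 1 = 0)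
    (htop : Algebra.adjoin ℚ {(x : K)} = ⊤) (n : ℕ) :
    (n : ℤ) ∣ m ^ 2 + 16 → ∀ z : 𝓞 K, n * z ∈ Algebra.adjoin ℤ {x} →
      z ∈ Algebra.adjoin ℤ {x} := by
  induction n using induction_on_primes with
  | zero =>
    intro h
    exact absurd (zero_dvd_iff.1 h) (by positivity)
  | one => simp
  | prime_mul p a hp ih =>
    intro h z hz
    push_cast at h hz
    refine ih ((dvd_mul_left _ _).trans h) z
      (mem_of_prime_smul_mem hodd hsf (Nat.prime_iff_prime_int.1 hp)
        ((dvd_mul_right _ _).trans h) hx htop ?_)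
    push_cast
    rwa [← mul_assoc]

/-- The derivative of the minimal polynomial at `θ` lies in the conductor of `ℤ[θ]`. -/
lemma derivative_mul_mem {m : ℤ} {x : 𝓞 K} (hmin : minpoly ℤ x = Pint m)
    (htop : Algebra.adjoin ℚ {(x : K)} = ⊤) (z : 𝓞 K) :
    (4 * x ^ 3 - 3 * m * x ^ 2 - 12 * x + m) * z ∈ Algebra.adjoin ℤ {x} := by
  have h : aeval x (derivative (minpoly ℤ x)) ∈ conductor ℤ x := by
    refine SetLike.le_def.mp ?_ (Ideal.mem_span_singleton_self _)
    rw [← conductor_mul_differentIdeal ℤ ℚ K x htop]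
    exact Ideal.mul_le_left
  have h2 := mem_conductor_iff.1 h z
  convert h2 using 2
  rw [hmin]
  simp [Pint, map_ofNat]
  ring

/-- The conductor contains `2 (m ^ 2 + 16)`, and the factor `m ^ 2 + 16` can be removed by
maximality at its prime divisors. -/
lemma two_mul_mem {m : ℤ} (hodd : Odd m) (hsf : Squarefree (m ^ 2 + 16)) {x : 𝓞 K}
    (hx : x ^ 4 - m * x ^ 3 - 6 * x ^ 2 + m * x + 1 = 0)
    (hmin : minpoly ℤ x = Pint m)
    (htop : Algebra.adjoin ℚ {(x : K)} = ⊤) (z : 𝓞 K) :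
    2 * z ∈ Algebra.adjoin ℤ {x} := by
  have hD : (((m ^ 2 + 16).natAbs : ℕ) : ℤ) = m ^ 2 + 16 :=
    Int.natAbs_of_nonneg (by positivity)
  refine mem_of_dvd_smul_mem hodd hsf hx htop (m ^ 2 + 16).natAbs (by rw [hD]) _ ?_
  have hD' : (((m ^ 2 + 16).natAbs : ℕ) : 𝓞 K) = m ^ 2 + 16 := by
    have := congrArg (Int.cast : ℤ → 𝓞 K) hD
    rw [Int.cast_natCast] at this
    rw [this]
    push_cast
    ring
  rw [hD']
  -- The cofactor is `(t - t') v (m t' + 8) / (2θD)` for `t = θ - θ⁻¹`, `t' = m - t`,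
  -- `v = θ + θ⁻¹`: here `P'(θ) = θ v (t - t')`, `(t - t') ^ 2 = D` and
  -- `v ^ 2 (m t' + 8) = 4D`.
  have hg := mul_mem (derivative_mul_mem hmin htop z)
    (mem_adjoin_of_coords x (2 * m) (-17) (-3 * m) 3)
  convert hg using 1
  push_cast
  linear_combination (-z * (12 * x ^ 2 - 9 * m * x - 32)) * hx

/-! ### The prime `2` -/

lemma exists_half {k : ℤ} {x : 𝓞 K}
    (hx : x ^ 4 - (2 * k + 1 : ℤ) * x ^ 3 - 6 * x ^ 2 + (2 * k + 1 : ℤ) * x + 1 = 0) :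
    ∃ w : 𝓞 K, 2 * w = 1 + x ^ 3 := by
  have hxK : (x : K) ^ 4 - (2 * k + 1) * (x : K) ^ 3 - 6 * (x : K) ^ 2 + (2 * k + 1) * (x : K) + 1
      = 0 := by
    have := congrArg (algebraMap (𝓞 K) K) hx
    push_cast at this
    simpa only [map_add, map_sub, map_mul, map_pow, map_intCast, map_one, map_zero, map_ofNat]
      using this
  -- The characteristic polynomial of `(1 + θ ^ 3) / 2` has integer coefficients.
  have hint : IsIntegral ℤ ((1 + (x : K) ^ 3) / 2) := by
    refine ⟨X ^ 4 + C (-4 * k ^ 3 - 6 * k ^ 2 - 18 * k - 10) * X ^ 3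
      + C (6 * k ^ 3 - 3 * k ^ 2 + 15 * k - 39) * X ^ 2
      + C (-2 * k ^ 3 + 9 * k ^ 2 + 3 * k + 48) * X + C (-3 * k ^ 2 - 3 * k - 13),
      by monicity!, ?_⟩
    simp only [eval₂_add, eval₂_mul, eval₂_pow, eval₂_X, eval₂_C]
    simp only [eq_intCast]
    push_cast
    generalize (x : K) = y at hxK
    generalize (k : K) = l at hxK
    linear_combination ((1/16) * y^8 + (1/8) * y^7 * l + (1/16) * y^7 + (1/4) * y^6 * l^2
      + (1/4) * y^6 * l + (7/16) * y^6 - (1/2) * y^5 * l - (1/4) * y^5 + (1/4) * y^4 * l^2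
      + (1/4) * y^4 * l + (9/4) * y^4 + (1/2) * y^3 * l + (1/4) * y^3 + (1/4) * y^2 * l^2
      + (1/4) * y^2 * l + (7/16) * y^2 - (1/8) * y * l - (1/16) * y + 1/16) * hxK
  obtain ⟨w, hw⟩ : ∃ w : 𝓞 K, (w : K) = (1 + (x : K) ^ 3) / 2 := ⟨⟨_, hint⟩, rfl⟩
  refine ⟨w, RingOfIntegers.coe_injective ?_⟩
  simp only [map_mul, map_ofNat, map_add, map_one, map_pow, hw]
  ring

/-- If `y = (1 + θ + θ ^ 2) / 2` were integral, then `(θ + 1) ^ 2 = θ + 2y` would be a unit modulo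
`2`, while `θ + 1` divides `4`. -/
lemma not_half {m : ℤ} {x : 𝓞 K} (hx : x ^ 4 - m * x ^ 3 - 6 * x ^ 2 + m * x + 1 = 0)
    (hmin : minpoly ℤ x = Pint m) (h2 : ∀ z : 𝓞 K, 2 * z ∈ Algebra.adjoin ℤ {x}) (y : 𝓞 K) :
    2 * y ≠ 1 + x + x ^ 2 := by
  intro hy
  obtain ⟨i, hi⟩ : ∃ i : 𝓞 K, x * i = 1 :=
    ⟨-(x ^ 3 - m * x ^ 2 - 6 * x + m), by linear_combination -hx⟩
  -- `P(X) = (X + 1) q(X) - 4`.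
  set q : 𝓞 K := x ^ 3 - (m + 1) * x ^ 2 + (m - 5) * x + 5 with hq
  have hq4 : (x + 1) * q = 4 := by rw [hq]; linear_combination hx
  have h1 : (x + 1) ^ 2 * i = 1 + 2 * (y * i) := by linear_combination hi - i * hy
  obtain ⟨s, hs⟩ : ∃ s : 𝓞 K, (x + 1) * s = 1 :=
    -- From `1 = (1 + 2yi)(1 - 2yi) + 4(yi) ^ 2`, where both summands are divisible by `x + 1`.
    ⟨(x + 1) * i * (1 - 2 * (y * i)) + q * (y * i) ^ 2, by
      linear_combination (1 - 2 * (y * i)) * h1 + (y * i) ^ 2 * hq4⟩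
  have hqs : q = 2 * (2 * s) := by linear_combination (-q) * hs + s * hq4
  obtain ⟨a, b, c, d, hco⟩ := exists_of_mem_adjoin hx (h2 s)
  have := coords_inj hmin (a := 5) (b := m - 5) (c := -(m + 1)) (d := 1)
    (a' := 2 * a) (b' := 2 * b) (c' := 2 * c) (d' := 2 * d) (by
      push_cast
      linear_combination hqs + 2 * hco)
  omega

end

theorem stmt_9 (m : ℤ) (hm : 1 ≤ m) (hm3 : m ≠ 3) (hodd : Odd m) (hsf2 : Squarefree (m ^ 2 + 16))
    (hsf : Squarefree (oddPart ((m ^ 2 + 16).natAbs)))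
    (K : Type) [Field K] [NumberField K] (θ : 𝓞 K)
    (hθ : Polynomial.aeval (θ : K) (Pm m) = 0)
    (hgen : IntermediateField.adjoin ℚ {(θ : K)} = ⊤) :
    orderIndex K θ = 2 := by
  have hx : θ ^ 4 - m * θ ^ 3 - 6 * θ ^ 2 + m * θ + 1 = 0 := by
    apply RingOfIntegers.coe_injective
    simpa [Pm, map_ofNat] using hθ
  have htop := adjoin_eq_top_of_generator hgen
  have hmin : minpoly ℤ θ = Pint m := by
    obtain ⟨p, hp, hpD⟩ := Int.exists_prime_and_dvd (n := m ^ 2 + 16)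
      (by intro h; have : 0 ≤ m ^ 2 := sq_nonneg m; omega)
    exact minpoly_eq_Pint hodd hsf2 hp hpD hx htop
  have h2 := two_mul_mem hodd hsf2 hx hmin htop
  obtain ⟨k, hk⟩ := hodd
  obtain ⟨w, hw⟩ := exists_half (k := k) (by rw [← hk]; exact hx)
  have hwn : w ∉ Algebra.adjoin ℤ {θ} := by
    intro h
    obtain ⟨a, b, c, d, hco⟩ := exists_of_mem_adjoin hx h
    have := coords_inj hmin (a := 1) (b := 0) (c := 0) (d := 1)
      (a' := 2 * a) (b' := 2 * b) (c' := 2 * c) (d' := 2 * d) (by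
        push_cast
        linear_combination -hw + 2 * hco)
    omega
  have hmem : ∀ z : 𝓞 K, z ∈ (Algebra.adjoin ℤ {θ}).toSubring.toAddSubgroup ↔
      z ∈ Algebra.adjoin ℤ {θ} := fun z => Iff.rfl
  rw [orderIndex, AddSubgroup.index_eq_two_iff]
  refine ⟨w, fun z => ?_⟩
  rw [hmem, hmem]
  obtain ⟨a, b, c, d, hz⟩ := exists_of_mem_adjoin hx (h2 z)
  obtain ⟨e, f, g, j, hdz⟩ := exists_of_mem_adjoin hx (derivative_mul_mem hmin htop z)
  -- `2 P'(θ) z` has even coordinates; they are computed from those of `2z` by reducing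
  -- `P' · (a + bX + cX ^ 2 + dX ^ 3)` modulo `P`.
  have hpar := coords_inj hmin (a' := 2 * e) (b' := 2 * f) (c' := 2 * g) (d' := 2 * j)
    (a := m * a - 4 * b - m * c - (m ^ 2 + 12) * d)
    (b := -12 * a - 3 * m * b - (m ^ 2 + 4) * c - (m ^ 3 + 13 * m) * d)
    (c := -3 * m * a + 12 * b + 3 * m * c + (5 * m ^ 2 + 68) * d)
    (d := 4 * a + m * b + (m ^ 2 + 12) * c + (m ^ 3 + 15 * m) * d) (by
      push_cast
      linear_combination -(4 * θ ^ 3 - 3 * m * θ ^ 2 - 12 * θ + m) * hz + 2 * hdz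
        - (4 * b + c * (4 * θ + m) + d * (4 * θ ^ 2 + m * θ + m ^ 2 + 12)) * hx)
  obtain ⟨hpar0, -, -, hpar3⟩ := hpar
  rw [hk] at hpar0 hpar3
  obtain ⟨u, hu⟩ : ∃ u : ℤ, a = c + d + 2 * u :=
    ⟨e + 2 * b - (k * a - k * c - (2 * k ^ 2 + 2 * k + 6) * d), by linear_combination hpar0⟩
  obtain ⟨v, hv⟩ : ∃ v : ℤ, b = 2 * v - c :=
    ⟨j - 2 * a - k * b - (2 * k ^ 2 + 2 * k + 6) * c - (4 * k ^ 3 + 6 * k ^ 2 + 18 * k + 8) * d, by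
      linear_combination hpar3⟩
  have huK : (a : 𝓞 K) = c + d + 2 * u := by rw [hu]; push_cast; ring
  have hvK : (b : 𝓞 K) = 2 * v - c := by rw [hv]; push_cast; ring
  obtain ⟨c', hc | hc⟩ : ∃ c', c = 2 * c' ∨ c = 2 * c' + 1 := Int.even_or_odd' c
  · have hcK : (c : 𝓞 K) = 2 * c' := by rw [hc]; push_cast; ring
    have hzw : z = c' + u + (v - c') * θ + c' * θ ^ 2 + d * w := by
      have h20 : (2 : 𝓞 K) ≠ 0 := two_ne_zero
      apply mul_left_cancel₀ h20
      linear_combination hz - d * hw + huK + θ * hvK + (1 - θ + θ ^ 2) * hcK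
    obtain ⟨n, hd | hd⟩ := Int.even_or_odd' d
    · have hdK : (d : 𝓞 K) = 2 * n := by rw [hd]; push_cast; ring
      have hzA : z ∈ Algebra.adjoin ℤ {θ} := by
        convert mem_adjoin_of_coords θ (c' + u + n) (v - c') c' n using 1
        push_cast
        linear_combination hzw + w * hdK + n * hw
      exact Or.inr ⟨hzA, fun h => hwn ((add_mem_cancel_left hzA).1 h)⟩
    · have hdK : (d : 𝓞 K) = 2 * n + 1 := by rw [hd]; push_cast; ring
      have hzA : z + w ∈ Algebra.adjoin ℤ {θ} := by
        convert mem_adjoin_of_coords θ (c' + u + n + 1) (v - c') c' (n + 1) using 1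
        push_cast
        linear_combination hzw + w * hdK + (n + 1) * hw
      exact Or.inl ⟨hzA, fun h => hwn ((add_mem_cancel_left h).1 hzA)⟩
  -- For odd `c`, subtracting an element of `ℤ[θ]` and `d w` from `z` leaves
  -- `(1 + θ + θ ^ 2) / 2`.
  · have hcK : (c : 𝓞 K) = 2 * c' + 1 := by rw [hc]; push_cast; ring
    refine absurd ?_ (not_half hx hmin h2
      (z - (c' + u) - (v - c' - 1) * θ - c' * θ ^ 2 - d * w))
    linear_combination hz - d * hw + huK + θ * hvK + (1 - θ + θ ^ 2) * hcK
end

section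
/- Let m be a positive integer with v_2(m) = 1 and the odd part of m^2 + 16 squarefree, let θ be a root of P_m(x) = x^4 - m x^3 - 6 x^2 + m x + 1, and K = ℚ(θ). Then [O_K : ℤ[θ]] = 4. -/
/-!
Write `m = 2n` with `n` odd and put `γ = (θ - θ⁻¹) / 2`. Dividing `P_m(θ) = 0` by `θ²` gives
`γ² = nγ + 1`, so `γ` is an algebraic integer generating `ℚ(√(n² + 4))`, and `θ² = 2γθ + 1`. Since
`m² + 16 = 4(n² + 4)`, the hypothesis says that the odd number `n² + 4` is squarefree; it is
not a square, because it lies strictly between `n²` and `(n + 2)²` and differs from `(n + 1)²`.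

The proof shows that `1, γ, θ, γθ` is a `ℤ`-basis of `𝓞 K`. Independence over `ℚ` (`indep_four`)
holds because `θ = γ + η` with `η² = 2 + nγ`, and the norm of `2 + nγ` is the nonsquare `n² + 4`.
This also makes `P_m` the minimal polynomial of `θ`, so `θ ↦ -1/θ` and `θ ↦ (θ - 1)/(θ + 1)` define
automorphisms `σ` and `τ` of `K`; `σ` fixes `γ` and `τ` sends `γ` to its conjugate `n - γ`.

For the integral elements (`int_coords_four`), let `x` be integral and write `2x = A + Bη` with `A`,
`B` in `ℚ(γ)`. The trace `A = x + σx` lies in `ℤ[γ]`, which is integrally closed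
(`int_coords_two`). So does `(x - σx)² = B²(2 + nγ)`; because `n² + 4` is squarefree, this forces
`B²`, hence `B`, into `ℤ[γ]`. Finally `A² ≡ B²(2 + nγ)` modulo `4`, and `2 + nγ` is not a
square modulo `4`, so `A` and `B` are divisible by `2` (`even_of_congr`).

In this basis `θ² = 1 + 2γθ` and `θ³ = 5θ + 2γ + 4nγθ`, so `ℤ[θ]` consists of the elements whose
coordinates at `γ` and `γθ` are even, a subgroup of index `4` (`index_adjoin`).
-/


open Polynomial IntermediateField NumberField

/-! ### Arithmetic over `ℤ` and `ℚ` -/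

lemma squarefree_int_of_mul_sq {D : ℤ} (hD : Squarefree D) {r : ℚ} {k : ℤ}
    (h : (D : ℚ) * r ^ 2 = k) : ∃ l : ℤ, r = l := by
  have hD0 : (D : ℚ) ≠ 0 := by exact_mod_cast hD.ne_zero
  have hint : IsIntegral ℤ ((D : ℚ) * r) := by
    apply IsIntegral.of_pow (n := 2) (by norm_num)
    have : ((D : ℚ) * r) ^ 2 = ((D * k : ℤ) : ℚ) := by push_cast; rw [← h]; ring
    rw [this]
    exact isIntegral_algebraMap (R := ℤ) (A := ℚ) (x := D * k)
  obtain ⟨j, hj⟩ := IsIntegrallyClosed.isIntegral_iff.mp hint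
  have hj : (j : ℚ) = D * r := by simpa using hj
  have h1 : j ^ 2 = D * k := by
    have : (j : ℚ) ^ 2 = D * k := by rw [hj, ← h]; ring
    exact_mod_cast this
  obtain ⟨l, hl⟩ := (hD.dvd_pow_iff_dvd (n := 2) (by norm_num)).mp ⟨k, h1⟩
  refine ⟨l, ?_⟩
  rw [hl] at hj
  push_cast at hj
  exact (mul_left_cancel₀ hD0 hj).symm

lemma rat_sq_ne {n : ℤ} (hn : 1 ≤ n) (r : ℚ) : r ^ 2 ≠ (n : ℚ) ^ 2 + 4 := by
  intro h
  have : IsSquare (((n ^ 2 + 4 : ℤ)) : ℚ) := ⟨r, by push_cast; rw [← h]; ring⟩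
  rw [Rat.isSquare_intCast_iff] at this
  obtain ⟨s, hs⟩ := this
  have h1 : |s| * |s| = n ^ 2 + 4 := by rw [abs_mul_abs_self, hs]
  have h0 := abs_nonneg s
  have h2 : n < |s| := by nlinarith
  have h3 : |s| < n + 2 := by nlinarith
  have h4 : |s| = n + 1 := by omega
  rw [h4] at h1
  have : 2 * n = 3 := by linarith
  omega

/-- The norm form of `ℚ(√(n² + 4))` is anisotropic. -/
lemma norm_form_eq_zero {n : ℤ} (hn : 1 ≤ n) {u v : ℚ} (h : u ^ 2 + n * u * v - v ^ 2 = 0) :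
    u = 0 ∧ v = 0 := by
  have hv : v = 0 := by
    by_contra hv
    -- completing the square: `(2u + nv)² = (n² + 4)v²`
    apply rat_sq_ne hn ((2 * u + n * v) / v)
    field_simp
    linear_combination 4 * h
  subst hv
  simpa using h

/-- Since `η² = 2 + nγ`, an integral `(A + Bη) / 2` forces `A² ≡ B² (2 + nγ)` modulo `4`. As
`2 + nγ = 1 + γ²` is not a square modulo `4` in `ℤ[γ]`, whose residue field at `2` is `𝔽₄`, this
makes `A` and `B` even. -/
lemma even_of_congr {n a b c d : ℤ} (hn : Odd n)
    (h1 : (4 : ℤ) ∣ a ^ 2 + b ^ 2 - (2 * (c ^ 2 + d ^ 2) + n * (2 * c * d + n * d ^ 2)))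
    (h2 : (4 : ℤ) ∣ 2 * a * b + n * b ^ 2
      - (n * (c ^ 2 + d ^ 2) + (2 + n ^ 2) * (2 * c * d + n * d ^ 2))) :
    2 ∣ a ∧ 2 ∣ b ∧ 2 ∣ c ∧ 2 ∣ d := by
  have key : ∀ n a b c d : ZMod 4, 2 * n = 2 →
      a ^ 2 + b ^ 2 - (2 * (c ^ 2 + d ^ 2) + n * (2 * c * d + n * d ^ 2)) = 0 →
      2 * a * b + n * b ^ 2
        - (n * (c ^ 2 + d ^ 2) + (2 + n ^ 2) * (2 * c * d + n * d ^ 2)) = 0 →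
      2 * a = 0 ∧ 2 * b = 0 ∧ 2 * c = 0 ∧ 2 * d = 0 := by
    decide
  have e : ∀ z : ℤ, (2 : ZMod 4) * z = 0 → 2 ∣ z := by
    intro z hz
    have : ((2 * z : ℤ) : ZMod 4) = 0 := by push_cast; exact hz
    rw [ZMod.intCast_zmod_eq_zero_iff_dvd] at this
    omega
  have hn' : (2 : ZMod 4) * n = 2 := by
    obtain ⟨k, rfl⟩ := hn
    have : ((4 * k : ℤ) : ZMod 4) = 0 := by
      rw [ZMod.intCast_zmod_eq_zero_iff_dvd]; exact ⟨k, rfl⟩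
    push_cast at this ⊢
    linear_combination this
  have := key n a b c d hn'
    (by have := (ZMod.intCast_zmod_eq_zero_iff_dvd _ 4).mpr h1; push_cast at this; exact this)
    (by have := (ZMod.intCast_zmod_eq_zero_iff_dvd _ 4).mpr h2; push_cast at this; exact this)
  exact ⟨e a this.1, e b this.2.1, e c this.2.2.1, e d this.2.2.2⟩

/-! ### Linear independence and integral elements -/

section field

variable {K : Type} [Field K] [CharZero K] {n : ℤ} {γ θ : K}

lemma indep_two (hn : 1 ≤ n) (hγ : γ ^ 2 = n * γ + 1) {a b : ℚ}
    (h : (a : K) + b * γ = 0) : a = 0 ∧ b = 0 := by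
  apply norm_form_eq_zero (n := n) hn
  -- the product of `a + bγ` with its conjugate `a + b(n - γ)`
  have : ((a ^ 2 + n * a * b - b ^ 2 : ℚ) : K) = 0 := by
    push_cast
    linear_combination (a + b * (n - γ)) * h + b ^ 2 * hγ
  exact_mod_cast this

lemma indep_two_eq (hn : 1 ≤ n) (hγ : γ ^ 2 = n * γ + 1) {a b c d : ℚ}
    (h : (a : K) + b * γ = c + d * γ) : a = c ∧ b = d := by
  have := indep_two hn hγ (a := a - c) (b := b - d) (by push_cast; linear_combination h)
  exact ⟨sub_eq_zero.mp this.1, sub_eq_zero.mp this.2⟩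

/-- `θ ∉ ℚ(γ)`: otherwise `2 + nγ = (θ - γ)²` would be a square in `ℚ(γ)`, and its norm
`n² + 4` would be a rational square. -/
lemma theta_ne (hn : 1 ≤ n) (hγ : γ ^ 2 = n * γ + 1) (hθ : θ ^ 2 = 2 * γ * θ + 1) (e f : ℚ) :
    θ ≠ e + f * γ := by
  intro h
  have h1 : ((e ^ 2 + (f - 1) ^ 2 : ℚ) : K) + ((2 * e * (f - 1) + n * (f - 1) ^ 2 : ℚ) : K) * γ
      = ((2 : ℚ) : K) + ((n : ℚ) : K) * γ := by
    push_cast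
    rw [h] at hθ
    linear_combination hθ + (1 - (f - 1) ^ 2 ) * hγ
  obtain ⟨h2, h3⟩ := indep_two_eq hn hγ h1
  apply rat_sq_ne hn (e ^ 2 + n * e * (f - 1) - (f - 1) ^ 2)
  have : (e ^ 2 + n * e * (f - 1) - (f - 1) ^ 2) ^ 2 = (e ^ 2 + (f - 1) ^ 2) ^ 2
      + n * (e ^ 2 + (f - 1) ^ 2) * (2 * e * (f - 1) + n * (f - 1) ^ 2)
      - (2 * e * (f - 1) + n * (f - 1) ^ 2) ^ 2 := by ring
  rw [this, h2, h3]
  ring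

lemma indep_four (hn : 1 ≤ n) (hγ : γ ^ 2 = n * γ + 1) (hθ : θ ^ 2 = 2 * γ * θ + 1)
    {p q r s : ℚ} (h : (p : K) + q * γ + r * θ + s * (γ * θ) = 0) :
    p = 0 ∧ q = 0 ∧ r = 0 ∧ s = 0 := by
  by_cases hN : r ^ 2 + n * r * s - s ^ 2 = 0
  · obtain ⟨rfl, rfl⟩ := norm_form_eq_zero hn hN
    obtain ⟨rfl, rfl⟩ := indep_two hn hγ (a := p) (b := q) (by
      push_cast at h; linear_combination h)
    simp
  · exfalso
    have hN' : ((r ^ 2 + n * r * s - s ^ 2 : ℚ) : K) ≠ 0 := by exact_mod_cast hN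
    -- `θ = -(p + qγ) / (r + sγ)`, with the denominator rationalised by `r + s(n - γ)`
    apply theta_ne hn hγ hθ (-(p * r + n * p * s - q * s) / (r ^ 2 + n * r * s - s ^ 2))
      (-(q * r - p * s) / (r ^ 2 + n * r * s - s ^ 2))
    push_cast at hN' ⊢
    rw [div_mul_eq_mul_div, ← add_div, eq_div_iff hN']
    linear_combination (r + s * (n - γ)) * h + (q * s + s ^ 2 * θ) * hγ

lemma indep_four_eq (hn : 1 ≤ n) (hγ : γ ^ 2 = n * γ + 1) (hθ : θ ^ 2 = 2 * γ * θ + 1)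
    {p q r s p' q' r' s' : ℤ}
    (h : (p : K) + q * γ + r * θ + s * (γ * θ) = p' + q' * γ + r' * θ + s' * (γ * θ)) :
    p = p' ∧ q = q' ∧ r = r' ∧ s = s' := by
  have := indep_four hn hγ hθ (p := p - p') (q := q - q') (r := r - r') (s := s - s')
    (by push_cast; linear_combination h)
  simp only [sub_eq_zero] at this
  exact_mod_cast this

lemma rat_of_isIntegral {q : ℚ} (h : IsIntegral ℤ (q : K)) : ∃ k : ℤ, q = k := by
  have h' : IsIntegral ℤ (algebraMap ℚ K q) := by simpa using h
  obtain ⟨j, hj⟩ := IsIntegrallyClosed.isIntegral_iff.mp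
    ((isIntegral_algebraMap_iff (algebraMap ℚ K).injective).mp h')
  exact ⟨j, by simpa using hj.symm⟩

omit [CharZero K] in
lemma int_isIntegral (k : ℤ) : IsIntegral ℤ (k : K) := by
  simpa using isIntegral_algebraMap (R := ℤ) (A := K) (x := k)

omit [CharZero K] in
lemma isIntegral_of_eq {x y : K} (h : IsIntegral ℤ x) (e : y = x) : IsIntegral ℤ y := e ▸ h

omit [CharZero K] in
lemma isIntegral_gamma (hγ : γ ^ 2 = n * γ + 1) : IsIntegral ℤ γ := by
  refine ⟨X ^ 2 - C n * X - 1, ?_, ?_⟩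
  · monicity!
  · rw [eval₂_sub, eval₂_sub, eval₂_mul, eval₂_C]
    simp [hγ]

/-- `ℤ[γ]` is integrally closed in `ℚ(γ)`. -/
lemma int_coords_two (hD : Squarefree (n ^ 2 + 4))
    (hγ : γ ^ 2 = n * γ + 1) (τ : K →+* K) (hτ : τ γ = n - γ) {a b : ℚ}
    (h : IsIntegral ℤ ((a : K) + b * γ)) : ∃ k l : ℤ, a = k ∧ b = l := by
  have h' : IsIntegral ℤ ((a : K) + b * (n - γ)) := by
    simpa [hτ] using map_isIntegral_int τ h
  obtain ⟨T, hT⟩ := rat_of_isIntegral (K := K) (q := 2 * a + n * b) (by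
    refine isIntegral_of_eq (h.add h') ?_; push_cast; ring)
  obtain ⟨N, hN⟩ := rat_of_isIntegral (K := K) (q := a ^ 2 + n * a * b - b ^ 2) (by
    refine isIntegral_of_eq (h.mul h') ?_; push_cast; linear_combination b ^ 2 * hγ)
  -- `(trace)² - 4 (norm) = (n² + 4)b²`
  obtain ⟨l, hl⟩ := squarefree_int_of_mul_sq hD (r := b) (k := T ^ 2 - 4 * N) (by
    push_cast; rw [← hT, ← hN]; ring)
  obtain ⟨k, hk⟩ := rat_of_isIntegral (K := K) (q := a) (by
    refine isIntegral_of_eq (h.sub ((int_isIntegral l).mul (isIntegral_gamma hγ))) ?_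
    rw [hl]; push_cast; ring)
  exact ⟨k, l, hk, hl⟩

/-- The elements `1, γ, θ, γθ` generate the ring of integers. Here `σ` fixes `ℚ(γ)` and `τ`
induces its nontrivial automorphism. -/
lemma int_coords_four (hn : Odd n) (hD : Squarefree (n ^ 2 + 4))
    (hγ : γ ^ 2 = n * γ + 1) (hθ : θ ^ 2 = 2 * γ * θ + 1)
    (σ τ : K →+* K) (hσγ : σ γ = γ) (hσθ : σ θ = 2 * γ - θ) (hτ : τ γ = n - γ)
    {p q r s : ℚ} {x : K} (hx : x = p + q * γ + r * θ + s * (γ * θ)) (h : IsIntegral ℤ x) :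
    ∃ p' q' r' s' : ℤ, x = p' + q' * γ + r' * θ + s' * (γ * θ) := by
  have hD0 : ((n : ℚ) ^ 2 + 4) ≠ 0 := by positivity
  have h' := map_isIntegral_int σ h
  have hσx : σ x = p + q * γ + r * (2 * γ - θ) + s * (γ * (2 * γ - θ)) := by
    rw [hx]; simp [hσγ, hσθ]
  -- `2x = A + Bη` with `η = θ - γ`, where `A = x + σ x` and `Bη = x - σ x`
  obtain ⟨A0, A1, hA0, hA1⟩ := int_coords_two hD hγ τ hτ (a := 2 * p + 2 * s)
    (b := 2 * q + 2 * r + 2 * n * s) (by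
      refine isIntegral_of_eq (h.add h') ?_; rw [hσx, hx]; push_cast; linear_combination (-2 * s) * hγ)
  set P : ℚ := (2 * r) ^ 2 + (2 * s) ^ 2 with hP
  set Q : ℚ := 2 * (2 * r) * (2 * s) + n * (2 * s) ^ 2 with hQ
  have hB2 : ((2 * r : ℚ) + (2 * s : ℚ) * γ : K) ^ 2 = P + Q * γ := by
    rw [hP, hQ]; push_cast; linear_combination 4 * s ^ 2 * hγ
  have hη : (θ - γ) ^ 2 = 2 + n * γ := by linear_combination hθ + hγ
  have hdiff : (x - σ x) ^ 2 = (P + Q * γ) * (2 + n * γ) := by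
    rw [← hB2, ← hη, hσx, hx]; push_cast; ring
  obtain ⟨c, d, hc, hd⟩ := int_coords_two hD hγ τ hτ (a := 2 * P + n * Q)
    (b := n * P + (2 + n ^ 2) * Q) (by
      refine isIntegral_of_eq ((h.sub h').pow 2) ?_; rw [hdiff]; push_cast
      linear_combination (- n * Q) * hγ)
  -- the norm of `B²(2 + nγ)` is `n² + 4` times the square of the norm of `B`
  obtain ⟨t, ht⟩ := squarefree_int_of_mul_sq hD
    (r := (2 * r) ^ 2 + n * (2 * r) * (2 * s) - (2 * s) ^ 2) (k := c ^ 2 + n * c * d - d ^ 2) (by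
      push_cast; rw [← hc, ← hd, hP, hQ]; ring)
  have hNC : c ^ 2 + n * c * d - d ^ 2 = (n ^ 2 + 4) * t ^ 2 := by
    have : (c ^ 2 + n * c * d - d ^ 2 : ℚ) = (n ^ 2 + 4) * t ^ 2 := by
      rw [← hc, ← hd, ← ht, hP, hQ]; ring
    exact_mod_cast this
  obtain ⟨k, hk⟩ := (hD.dvd_pow_iff_dvd (x := n ^ 2 + 4) (y := 2 * c + n * d) (n := 2)
    (by norm_num)).mp ⟨4 * t ^ 2 + d ^ 2, by linear_combination 4 * hNC⟩
  have hDodd : ¬ (2 ∣ n ^ 2 + 4) := by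
    obtain ⟨j, rfl⟩ := hn
    intro ⟨i, hi⟩
    have : 2 * (2 * j ^ 2 + 2 * j + 2 - i) = -1 := by linear_combination hi
    omega
  -- `n² + 4` divides `2c + nd` and is odd, so it also divides `2d - nc`; these two
  -- divisibilities are what solving `c + dγ = (P + Qγ)(2 + nγ)` for integers `P`, `Q` requires
  have hcop : IsCoprime (n ^ 2 + 4) 2 :=
    ((Int.prime_two.irreducible.coprime_iff_not_dvd).mpr hDodd).symm
  obtain ⟨Q', hQ'⟩ := hcop.dvd_of_dvd_mul_left (z := 2 * d - n * c)
    ⟨d - n * k, by linear_combination -n * hk⟩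
  have hQi : Q = Q' := by
    have : (2 * d - n * c : ℚ) = (n ^ 2 + 4) * Q' := by exact_mod_cast hQ'
    rw [← hc, ← hd] at this
    exact mul_left_cancel₀ hD0 (by linear_combination this)
  have hPi : P = ((c - k : ℤ) : ℚ) := by
    have : (2 * c + n * d : ℚ) = (n ^ 2 + 4) * k := by exact_mod_cast hk
    apply mul_left_cancel₀ hD0
    push_cast
    linear_combination (n ^ 2 + 2) * hc - n * hd - this
  obtain ⟨B0, B1, hB0, hB1⟩ := int_coords_two hD hγ τ hτ (a := 2 * r) (b := 2 * s) (by
    apply IsIntegral.of_pow (n := 2) (by norm_num)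
    rw [hB2, hPi, hQi]
    simpa using (int_isIntegral (c - k)).add ((int_isIntegral Q').mul (isIntegral_gamma hγ)))
  -- integrality of `x * σ x = (A² - B²(2 + nγ)) / 4`
  obtain ⟨u, v, hu, hv⟩ := int_coords_two hD hγ τ hτ
    (a := (((A0 : ℚ) ^ 2 + A1 ^ 2) - (2 * P + n * Q)) / 4)
    (b := ((2 * A0 * A1 + n * (A1 : ℚ) ^ 2) - (n * P + (2 + n ^ 2) * Q)) / 4) (by
      have hsum : x + σ x = A0 + A1 * γ := by
        have e0 : (2 * p + 2 * s : K) = A0 := by exact_mod_cast congrArg (Rat.cast (K := K)) hA0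
        have e1 : (2 * q + 2 * r + 2 * n * s : K) = A1 := by
          exact_mod_cast congrArg (Rat.cast (K := K)) hA1
        rw [← e0, ← e1, hσx, hx]; linear_combination (2 * s) * hγ
      have e : x * σ x = ((A0 + A1 * γ) ^ 2 - (P + Q * γ) * (2 + n * γ)) / 4 := by
        rw [← hsum, ← hdiff]; ring
      refine isIntegral_of_eq (h.mul h') ?_
      rw [e]; push_cast
      linear_combination ((n * Q - A1 ^ 2) / 4) * hγ)
  rw [hP, hQ, hB0, hB1] at hu hv
  obtain ⟨⟨i1, e1⟩, ⟨i2, e2⟩, ⟨i3, e3⟩, ⟨i4, e4⟩⟩ := even_of_congr hn (a := A0) (b := A1)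
    (c := B0) (d := B1)
    ⟨u, by
      have : ((A0 : ℚ) ^ 2 + A1 ^ 2 - (2 * (B0 ^ 2 + B1 ^ 2) + n * (2 * B0 * B1 + n * B1 ^ 2)))
        = 4 * u := by linear_combination 4 * hu
      exact_mod_cast this⟩
    ⟨v, by
      have : (2 * (A0 : ℚ) * A1 + n * A1 ^ 2
        - (n * (B0 ^ 2 + B1 ^ 2) + (2 + n ^ 2) * (2 * B0 * B1 + n * B1 ^ 2)))
        = 4 * v := by linear_combination 4 * hv
      exact_mod_cast this⟩
  have f3 : r = i3 := by rw [e3] at hB0; push_cast at hB0; linarith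
  have f4 : s = i4 := by rw [e4] at hB1; push_cast at hB1; linarith
  have f1 : p = i1 - i4 := by rw [e1] at hA0; push_cast at hA0; linarith
  have f2 : q = i2 - i3 - n * i4 := by rw [e2, f3, f4] at hA1; push_cast at hA1; linarith
  refine ⟨i1 - i4, i2 - i3 - n * i4, i3, i4, ?_⟩
  rw [hx, f1, f2, f3, f4]
  push_cast
  ring

end field

/-! ### The order `ℤ[θ]` and its index -/

/-- The `R`-span of `1, 2γ, θ, 2γθ` contains `1` and is stable under multiplication by `θ`, so it
contains `R[θ]`. -/
lemma exists_aeval_eq {R A : Type} [CommRing R] [CommRing A] [Algebra R A] {n : R} {γ θ : A}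
    (hγ : γ ^ 2 = algebraMap R A n * γ + 1) (hθ : θ ^ 2 = 2 * γ * θ + 1) (f : R[X]) :
    ∃ p q r s : R, aeval θ f = algebraMap R A p + algebraMap R A (2 * q) * γ
      + algebraMap R A r * θ + algebraMap R A (2 * s) * (γ * θ) := by
  induction f using Polynomial.induction_on with
  | C a => exact ⟨a, 0, 0, 0, by simp⟩
  | add f g hf hg =>
    obtain ⟨p, q, r, s, h⟩ := hf
    obtain ⟨p', q', r', s', h'⟩ := hg
    refine ⟨p + p', q + q', r + r', s + s', ?_⟩
    rw [map_add, h, h']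
    simp only [map_add, map_mul]
    ring
  | monomial k a hf =>
    obtain ⟨p, q, r, s, h⟩ := hf
    refine ⟨r, s, p + 4 * s, q + r + 2 * s * n, ?_⟩
    rw [pow_succ, ← mul_assoc, map_mul, h, aeval_X]
    simp only [map_add, map_mul, map_ofNat]
    linear_combination (algebraMap R A r + 2 * algebraMap R A s * γ) * hθ
      + 4 * algebraMap R A s * θ * hγ

lemma mem_adjoin_iff {A : Type} [CommRing A] {n : ℤ} {γ θ : A}
    (hγ : γ ^ 2 = n * γ + 1) (hθ : θ ^ 2 = 2 * γ * θ + 1) (x : A) :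
    x ∈ Algebra.adjoin ℤ {θ} ↔
      ∃ p q r s : ℤ, x = p + (2 * q : ℤ) * γ + r * θ + (2 * s : ℤ) * (γ * θ) := by
  constructor
  · intro hx
    rw [Algebra.adjoin_singleton_eq_range_aeval] at hx
    obtain ⟨f, rfl⟩ := hx
    simpa using exists_aeval_eq (R := ℤ) (n := n) (by simpa using hγ) hθ f
  · rintro ⟨p, q, r, s, rfl⟩
    have hmem : θ ∈ Algebra.adjoin ℤ {θ} := Algebra.self_mem_adjoin_singleton ℤ θ
    have h1 : 2 * (γ * θ) ∈ Algebra.adjoin ℤ {θ} := by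
      have : 2 * (γ * θ) = θ ^ 2 - 1 := by rw [hθ]; ring
      rw [this]
      exact sub_mem (pow_mem hmem 2) (one_mem _)
    have h2 : 2 * γ ∈ Algebra.adjoin ℤ {θ} := by
      have : 2 * γ = θ ^ 3 - 5 * θ - 2 * n * (θ ^ 2 - 1) := by
        linear_combination (2 * n - 2 * γ - θ) * hθ - 4 * θ * hγ
      rw [this]
      refine sub_mem (sub_mem (pow_mem hmem 3) (mul_mem (ofNat_mem _ 5) hmem))
        (mul_mem (mul_mem (ofNat_mem _ 2) (intCast_mem _ n))
          (sub_mem (pow_mem hmem 2) (one_mem _)))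
    have e : (p + (2 * q : ℤ) * γ + r * θ + (2 * s : ℤ) * (γ * θ) : A)
        = p + q * (2 * γ) + r * θ + s * (2 * (γ * θ)) := by push_cast; ring
    rw [e]
    exact add_mem (add_mem (add_mem (intCast_mem _ p) (mul_mem (intCast_mem _ q) h2))
      (mul_mem (intCast_mem _ r) hmem)) (mul_mem (intCast_mem _ s) h1)

/-- If `1, γ, θ, γθ` is a `ℤ`-basis of `A`, then `ℤ[θ]` is the subgroup of elements whose
coordinates at `γ` and `γθ` are even. -/
lemma index_adjoin {A : Type} [CommRing A] {n : ℤ} {γ θ : A}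
    (hγ : γ ^ 2 = n * γ + 1) (hθ : θ ^ 2 = 2 * γ * θ + 1)
    (hspan : ∀ x : A, ∃ p q r s : ℤ, x = p + q * γ + r * θ + s * (γ * θ))
    (hind : ∀ p q r s p' q' r' s' : ℤ, (p : A) + q * γ + r * θ + s * (γ * θ)
      = p' + q' * γ + r' * θ + s' * (γ * θ) → p = p' ∧ q = q' ∧ r = r' ∧ s = s') :
    (Algebra.adjoin ℤ {θ}).toSubring.toAddSubgroup.index = 4 := by
  let ψ : ℤ × ℤ × ℤ × ℤ →+ A := AddMonoidHom.mk'
    (fun v => v.1 + v.2.1 * γ + v.2.2.1 * θ + v.2.2.2 * (γ * θ)) (by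
      intro a b
      simp only [Prod.fst_add, Prod.snd_add]
      push_cast
      ring)
  let φ : ℤ × ℤ × ℤ × ℤ →+ ZMod 2 × ZMod 2 := AddMonoidHom.mk'
    (fun v => (v.2.1, v.2.2.2)) (by
      intro a b
      simp)
  have hψ : Function.Surjective ψ := by
    intro x
    obtain ⟨p, q, r, s, h⟩ := hspan x
    exact ⟨(p, q, r, s), h.symm⟩
  have hφ : Function.Surjective φ := by
    rintro ⟨a, b⟩
    obtain ⟨q, rfl⟩ := ZMod.intCast_surjective a
    obtain ⟨s, rfl⟩ := ZMod.intCast_surjective b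
    exact ⟨(0, q, 0, s), rfl⟩
  have hker : (Algebra.adjoin ℤ {θ}).toSubring.toAddSubgroup.comap ψ = φ.ker := by
    ext ⟨p, q, r, s⟩
    have h1 : (p, q, r, s) ∈ φ.ker ↔ 2 ∣ q ∧ 2 ∣ s := by
      rw [AddMonoidHom.mem_ker]
      change (((q : ZMod 2), (s : ZMod 2)) = 0) ↔ _
      rw [Prod.mk_eq_zero, ZMod.intCast_zmod_eq_zero_iff_dvd, ZMod.intCast_zmod_eq_zero_iff_dvd]
      rfl
    rw [h1]
    change ((p : A) + q * γ + r * θ + s * (γ * θ)) ∈ Algebra.adjoin ℤ {θ} ↔ _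
    rw [mem_adjoin_iff hγ hθ]
    constructor
    · rintro ⟨p', q', r', s', h⟩
      obtain ⟨-, h2, -, h4⟩ := hind _ _ _ _ _ _ _ _ h
      exact ⟨⟨q', h2⟩, ⟨s', h4⟩⟩
    · rintro ⟨⟨q', rfl⟩, ⟨s', rfl⟩⟩
      exact ⟨p, q', r, s', rfl⟩
  rw [← AddSubgroup.index_comap_of_surjective _ hψ, hker, AddSubgroup.index_ker,
    AddMonoidHom.range_eq_top.mpr hφ]
  simp

/-! ### The polynomial `P_m` and the field it generates -/

lemma exists_half_s10 {m : ℤ} (hm : 1 ≤ m) (hv : padicValInt 2 m = 1)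
    (hsf : Squarefree (oddPart ((m ^ 2 + 16).natAbs))) :
    ∃ n : ℤ, m = 2 * n ∧ 1 ≤ n ∧ Odd n ∧ Squarefree (n ^ 2 + 4) := by
  have h1 : (2 : ℤ) ^ 1 ∣ m := by
    have := padicValInt_dvd (p := 2) m
    rwa [hv] at this
  have h2 : ¬ (2 : ℤ) ^ 2 ∣ m := by
    intro h
    have := (padicValInt_dvd_iff (p := 2) 2 m).mp h
    omega
  obtain ⟨n, rfl⟩ := h1
  have hodd : Odd n := by
    by_contra h
    rw [Int.not_odd_iff_even, even_iff_two_dvd] at h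
    obtain ⟨k, rfl⟩ := h
    exact h2 ⟨k, by ring⟩
  refine ⟨n, by ring, by omega, hodd, ?_⟩
  have e : (((2 : ℤ) ^ 1 * n) ^ 2 + 16).natAbs = 2 ^ 2 * (n ^ 2 + 4).natAbs := by
    rw [show ((2 : ℤ) ^ 1 * n) ^ 2 + 16 = 2 ^ 2 * (n ^ 2 + 4) by ring, Int.natAbs_mul]
    rfl
  have hD : ¬ 2 ∣ (n ^ 2 + 4).natAbs := by
    rw [← Int.ofNat_dvd_left]
    obtain ⟨j, rfl⟩ := hodd
    rintro ⟨i, hi⟩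
    have : 2 * (2 * j ^ 2 + 2 * j + 2 - i) = -1 := by push_cast at hi; linear_combination hi
    omega
  have hD0 : (n ^ 2 + 4).natAbs ≠ 0 := fun h => hD (h ▸ dvd_zero 2)
  have hf : (2 ^ 2 * (n ^ 2 + 4).natAbs).factorization 2 = 2 := by
    rw [Nat.factorization_mul (by norm_num) hD0, Nat.Prime.factorization_pow Nat.prime_two]
    simp [Nat.factorization_eq_zero_of_not_dvd hD]
  rw [oddPart, e, hf, Nat.mul_div_cancel_left _ (by norm_num)] at hsf
  exact Int.squarefree_natAbs.mp hsf

lemma natDegree_Pm (m : ℤ) : (Pm m).natDegree = 4 := by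
  unfold Pm; compute_degree!

lemma monic_Pm (m : ℤ) : (Pm m).Monic := by
  unfold Pm; monicity!

lemma aeval_Pm {K : Type} [Field K] [CharZero K] (m : ℤ) (y : K) :
    aeval y (Pm m) = y ^ 4 - m * y ^ 3 - 6 * y ^ 2 + m * y + 1 := by
  simp only [Pm, map_add, map_sub, map_mul, map_pow, aeval_X, aeval_C, map_ofNat, map_one,
    eq_ratCast, Rat.cast_intCast]

theorem stmt_10 (m : ℤ) (hm : 1 ≤ m) (hv : padicValInt 2 m = 1)
    (hsf : Squarefree (oddPart ((m ^ 2 + 16).natAbs)))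
    (K : Type) [Field K] [NumberField K] (θ : 𝓞 K)
    (hθ : Polynomial.aeval (θ : K) (Pm m) = 0)
    (hgen : IntermediateField.adjoin ℚ {(θ : K)} = ⊤) :
    orderIndex K θ = 4 := by
  obtain ⟨n, rfl, hn, hodd, hD⟩ := exists_half_s10 hm hv hsf
  set t : K := (θ : K) with ht
  have hP : t ^ 4 - (2 * n) * t ^ 3 - 6 * t ^ 2 + (2 * n) * t + 1 = 0 := by
    rw [aeval_Pm] at hθ
    push_cast at hθ
    exact hθ
  have ht0 : t ≠ 0 := by
    intro h
    rw [h] at hP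
    norm_num at hP
  have ht1 : t - 1 ≠ 0 := by
    intro h
    rw [sub_eq_zero.mp h] at hP
    ring_nf at hP
    norm_num at hP
  have ht2 : t + 1 ≠ 0 := by
    intro h
    rw [eq_neg_of_add_eq_zero_left h] at hP
    ring_nf at hP
    norm_num at hP
  obtain ⟨γ, hγdef⟩ : ∃ γ : K, γ = (t - t⁻¹) / 2 := ⟨_, rfl⟩
  have hγ : γ ^ 2 = n * γ + 1 := by
    rw [hγdef]
    field_simp
    linear_combination hP
  have hθ2 : t ^ 2 = 2 * γ * t + 1 := by
    rw [hγdef]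
    field_simp
    ring
  have hint : IsIntegral ℚ t := Algebra.IsIntegral.isIntegral t
  have hdeg : (minpoly ℚ t).natDegree = Module.finrank ℚ K :=
    (Field.primitive_element_iff_minpoly_natDegree_eq ℚ t).mp hgen
  have hli : LinearIndependent ℚ ![1, γ, t, γ * t] := by
    rw [Fintype.linearIndependent_iff]
    intro g hg
    simp only [Fin.sum_univ_four, Algebra.smul_def, eq_ratCast] at hg
    have := indep_four hn hγ hθ2 (p := g 0) (q := g 1) (r := g 2) (s := g 3) (by
      simpa using hg)
    intro i
    fin_cases i
    exacts [this.1, this.2.1, this.2.2.1, this.2.2.2]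
  have h4 : 4 ≤ Module.finrank ℚ K := by
    simpa using hli.fintype_card_le_finrank
  have hmin : minpoly ℚ t = Pm (2 * n) := by
    refine (Polynomial.eq_of_monic_of_dvd_of_natDegree_le (minpoly.monic hint) (monic_Pm _)
      (minpoly.dvd ℚ t hθ) ?_).symm
    rw [natDegree_Pm, hdeg]
    exact h4
  have hadj : Algebra.adjoin ℚ {t} = ⊤ := by
    rw [← IntermediateField.adjoin_simple_toSubalgebra_of_isAlgebraic hint.isAlgebraic, hgen]
    rfl
  let pb : PowerBasis ℚ K := PowerBasis.ofAdjoinEqTop hint hadj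
  have hgenpb : pb.gen = t := PowerBasis.ofAdjoinEqTop_gen hint hadj
  have hlift : ∀ y : K, aeval y (Pm (2 * n)) = 0 → ∃ σ : K →+* K, σ t = y := by
    intro y hy
    have hy' : aeval y (minpoly ℚ pb.gen) = 0 := by rw [hgenpb, hmin]; exact hy
    refine ⟨(pb.lift y hy' : K →+* K), ?_⟩
    exact (congrArg (pb.lift y hy') hgenpb).symm.trans (pb.lift_gen y hy')
  -- the roots of `P_m` are permuted by `y ↦ -1/y` and `y ↦ (y - 1)/(y + 1)`
  obtain ⟨σ, hσ⟩ := hlift (-t⁻¹) (by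
    rw [aeval_Pm]
    push_cast
    field_simp
    linear_combination hP)
  obtain ⟨τ, hτ⟩ := hlift ((t - 1) / (t + 1)) (by
    rw [aeval_Pm]
    push_cast
    field_simp
    linear_combination (-4) * hP)
  have hσγ : σ γ = γ := by
    rw [hγdef, map_div₀, map_sub, map_inv₀, hσ, map_ofNat]
    field_simp
    ring
  have hσθ : σ t = 2 * γ - t := by
    rw [hσ, hγdef]
    ring
  have hτγ : τ γ = n - γ := by
    rw [hγdef, map_div₀, map_sub, map_inv₀, hτ, map_ofNat]
    field_simp
    linear_combination hP
  have hspanK : ∀ x : K, ∃ p q r s : ℚ, x = p + q * γ + r * t + s * (γ * t) := by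
    intro x
    have hx : x ∈ Algebra.adjoin ℚ {t} := by rw [hadj]; trivial
    rw [Algebra.adjoin_singleton_eq_range_aeval] at hx
    obtain ⟨f, rfl⟩ := hx
    obtain ⟨p, q, r, s, h⟩ := exists_aeval_eq (R := ℚ) (n := (n : ℚ)) (by simpa using hγ) hθ2 f
    exact ⟨p, 2 * q, r, 2 * s, by simpa using h⟩
  let g : 𝓞 K := ⟨γ, isIntegral_gamma hγ⟩
  have hg : (g : K) = γ := rfl
  apply index_adjoin (γ := g) (n := n)
  · apply RingOfIntegers.ext
    simpa [hg] using hγ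
  · apply RingOfIntegers.ext
    have h2 : algebraMap (𝓞 K) K 2 = 2 := map_ofNat _ 2
    simpa [hg, h2, ← ht] using hθ2
  · intro x
    obtain ⟨p, q, r, s, hx⟩ := hspanK x
    obtain ⟨p', q', r', s', h⟩ := int_coords_four hodd hD hγ hθ2 σ τ hσγ hσθ hτγ hx
      x.isIntegral_coe
    refine ⟨p', q', r', s', RingOfIntegers.ext ?_⟩
    simpa [hg] using h
  · intro p q r s p' q' r' s' h
    apply indep_four_eq hn hγ hθ2
    have := congrArg (fun z : 𝓞 K => (z : K)) h
    simpa [hg] using this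
end

section
/- Let m be a positive integer with v_2(m) = 2 and the odd part of m^2 + 16 squarefree, let θ be a root of P_m(x) = x^4 - m x^3 - 6 x^2 + m x + 1, and K = ℚ(θ). Then [O_K : ℤ[θ]] = 8. -/
/-!
Write `m = 4k` with `k` odd and `k² + 1 = 2D`; then `D` is odd and `m² + 16 = 32D`, so `D` is
squarefree. The element `y = θ - k` generates the same order as `θ` and satisfies
`y⁴ - 12Dy² - 16kDy + 4D(2 - 3D) = 0`. Put `z = y²/2` and `u = (y³ - 6Dy)/4`. Both are integral,
and the lattice spanned by `1, y, z, u` is closed under multiplication (`Table`). In these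
coordinates `ℤ[y]` is `ℤ ⊕ ℤ ⊕ 2ℤ ⊕ 4ℤ`, of index `8` (`orderIndex_eq_eight`), so it remains to
see that `1, y, z, u` span the ring of integers (`Table.mem_quadSpan_of_isIntegral`).

The element `π = u - kD` is a root of `T⁴ - 8kDT³ - 12D²T² + 2D³`, which is Eisenstein at `2`. So
`K` has degree `4`, `K = ℚ(π)`, and `ℤ[π]` has odd index in the ring of integers: for each
algebraic integer `w`, some odd multiple of `w` lies in `ℤ[π]`, hence in the span. On the other
hand the derivative at `y` of its minimal polynomial is `16π`, and it carries `w` into `ℤ[y]`;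
since `π` divides `2D³`, so does `32D³`. The minimal polynomial of `y` is Eisenstein at every prime
dividing `D`, so already `32w` lies in `ℤ[y]`, hence in the span. A multiple of `w` by an odd
number and `32w` both being in the span, `w` is.
-/

open Polynomial IntermediateField NumberField

/-! ### Eisenstein quartics and orders generated by one element -/

/-- The monic integer quartic `X⁴ + aX³ + bX² + cX + d`. -/
noncomputable def quartic (a b c d : ℤ) : ℤ[X] :=
  X ^ 4 + C a * X ^ 3 + C b * X ^ 2 + C c * X + C d

lemma quartic_natDegree (a b c d : ℤ) : (quartic a b c d).natDegree = 4 := by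
  unfold quartic; compute_degree!

lemma quartic_monic (a b c d : ℤ) : (quartic a b c d).Monic := by
  unfold quartic; monicity!

lemma aeval_quartic {A : Type*} [CommRing A] (x : A) (a b c d : ℤ) :
    aeval x (quartic a b c d) = x ^ 4 + a * x ^ 3 + b * x ^ 2 + c * x + d := by
  simp [quartic]

lemma quartic_isEisensteinAt {p a b c d : ℤ} (hp : Prime p) (ha : p ∣ a) (hb : p ∣ b)
    (hc : p ∣ c) (hd : p ∣ d) (hd2 : ¬ p ^ 2 ∣ d) :
    (quartic a b c d).IsEisensteinAt (Submodule.span ℤ {p}) where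
  leading := by
    rw [(quartic_monic a b c d).leadingCoeff]
    exact fun h => hp.not_dvd_one (Ideal.mem_span_singleton.1 h)
  mem := by
    intro n hn
    rw [quartic_natDegree] at hn
    refine Ideal.mem_span_singleton.2 ?_
    interval_cases n <;> simpa [quartic, coeff_X, coeff_C, coeff_X_pow, -eq_intCast]
  notMem := by
    intro h
    have h' : (quartic a b c d).coeff 0 ∈ Ideal.span {p} ^ 2 := h
    rw [Ideal.span_singleton_pow, Ideal.mem_span_singleton] at h'
    exact hd2 (by simpa [quartic, coeff_X, coeff_C, coeff_X_pow] using h')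

lemma isIntegral_of_quartic {A : Type*} [CommRing A] {x : A} (a b c d : ℤ)
    (h : x ^ 4 + a * x ^ 3 + b * x ^ 2 + c * x + d = 0) : IsIntegral ℤ x :=
  ⟨quartic a b c d, quartic_monic a b c d, by rw [← aeval_def, aeval_quartic, h]⟩

section Field

variable {K : Type} [Field K] [NumberField K]

lemma minpoly_eq_quartic {x : K} {a b c d : ℤ} (hK : Module.finrank ℚ K = 4)
    (hx : ℚ⟮x⟯ = ⊤) (h : x ^ 4 + a * x ^ 3 + b * x ^ 2 + c * x + d = 0) :
    minpoly ℤ x = quartic a b c d := by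
  have hint := isIntegral_of_quartic a b c d h
  have hdvd : minpoly ℤ x ∣ quartic a b c d :=
    minpoly.isIntegrallyClosed_dvd hint (by rw [aeval_quartic, h])
  refine (eq_of_monic_of_dvd_of_natDegree_le (minpoly.monic hint) (quartic_monic a b c d)
    hdvd ?_).symm
  have h1 : (minpoly ℚ x).natDegree = 4 := by
    rw [← IntermediateField.adjoin.finrank (Algebra.IsIntegral.isIntegral x), hx,
      IntermediateField.finrank_top', hK]
  rw [quartic_natDegree, ← h1, minpoly.isIntegrallyClosed_eq_field_fractions' ℚ hint,
    (minpoly.monic hint).natDegree_map]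

/-- A number field of degree at most `4` that contains a root of an Eisenstein quartic has degree
exactly `4` and is generated by that root. -/
lemma finrank_eq_four_of_eisenstein {x : K} {p a b c d : ℤ} (hK : Module.finrank ℚ K ≤ 4)
    (h : x ^ 4 + a * x ^ 3 + b * x ^ 2 + c * x + d = 0) (hp : Prime p)
    (he : (quartic a b c d).IsEisensteinAt (Submodule.span ℤ {p})) :
    Module.finrank ℚ K = 4 ∧ ℚ⟮x⟯ = ⊤ := by
  have hirr : Irreducible (quartic a b c d) :=
    he.irreducible ((Ideal.span_singleton_prime hp.ne_zero).2 hp)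
      (quartic_monic a b c d).isPrimitive (by rw [quartic_natDegree]; norm_num)
  have hmin : (quartic a b c d).map (algebraMap ℤ ℚ) = minpoly ℚ x :=
    minpoly.eq_of_irreducible_of_monic
      (((quartic_monic a b c d).irreducible_iff_irreducible_map_fraction_map).1 hirr)
      (by rw [aeval_map_algebraMap, aeval_quartic, h]) ((quartic_monic a b c d).map _)
  have h4 : Module.finrank ℚ ℚ⟮x⟯ = 4 := by
    rw [IntermediateField.adjoin.finrank (Algebra.IsIntegral.isIntegral x), ← hmin,
      (quartic_monic a b c d).natDegree_map, quartic_natDegree]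
  have hle : Module.finrank ℚ ℚ⟮x⟯ ≤ Module.finrank ℚ K := by
    rw [← IntermediateField.finrank_top' (F := ℚ) (E := K)]
    exact IntermediateField.finrank_le_of_le_right le_top
  have hK4 : Module.finrank ℚ K = 4 := by omega
  refine ⟨hK4, ?_⟩
  apply IntermediateField.eq_of_le_of_finrank_eq le_top
  rw [h4, IntermediateField.finrank_top', hK4]

lemma exists_powerBasis {x : K} (hx : ℚ⟮x⟯ = ⊤) : ∃ B : PowerBasis ℚ K, B.gen = x := by
  have hint : IsIntegral ℚ x := Algebra.IsIntegral.isIntegral x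
  have : Algebra.adjoin ℚ {x} = ⊤ := by
    rw [← IntermediateField.adjoin_simple_toSubalgebra_of_isAlgebraic hint.isAlgebraic, hx,
      IntermediateField.top_toSubalgebra]
  exact ⟨PowerBasis.ofAdjoinEqTop hint this, PowerBasis.ofAdjoinEqTop_gen _ _⟩

/-- Some nonzero integer multiplies every algebraic integer of `K = ℚ(x)` into `ℤ[x]`. -/
lemma exists_int_mul_mem_adjoin {x : K} (hx : ℚ⟮x⟯ = ⊤) (hint : IsIntegral ℤ x) :
    ∃ n : ℕ, n ≠ 0 ∧ ∀ w : K, IsIntegral ℤ w → (n : ℤ) • w ∈ Algebra.adjoin ℤ {x} := by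
  obtain ⟨B, rfl⟩ := exists_powerBasis hx
  have h0 := Algebra.discr_not_zero_of_basis ℚ B.basis
  have h1 : IsIntegral ℤ (Algebra.discr ℚ B.basis) :=
    Algebra.discr_isIntegral ℚ fun i => by
      rw [B.basis_eq_pow]; exact hint.pow _
  obtain ⟨n, hn⟩ := IsIntegrallyClosed.isIntegral_iff.1 h1
  have hn0 : n ≠ 0 := by rintro rfl; exact h0 (by rw [← hn, map_zero])
  refine ⟨n.natAbs, by simpa using hn0, fun w hw => ?_⟩
  have h2 := Algebra.discr_mul_isIntegral_mem_adjoin ℚ hint hw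
  rw [← hn, algebraMap_smul] at h2
  rcases Int.natAbs_eq n with h | h
  · rwa [← h]
  · rw [show ((n.natAbs : ℕ) : ℤ) = -n by omega, neg_smul]
    exact neg_mem h2

/-- If the minimal polynomial of `x` is Eisenstein at `p`, then `p` does not divide the index of
`ℤ[x]` in the ring of integers. -/
lemma mem_adjoin_of_prime_pow {x w : K} {p a b c d : ℤ} (hK : Module.finrank ℚ K = 4)
    (hx : ℚ⟮x⟯ = ⊤) (h : x ^ 4 + a * x ^ 3 + b * x ^ 2 + c * x + d = 0) (hp : Prime p)
    (he : (quartic a b c d).IsEisensteinAt (Submodule.span ℤ {p})) (n : ℕ)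
    (hw : IsIntegral ℤ w) (hpw : p ^ n • w ∈ Algebra.adjoin ℤ {x}) :
    w ∈ Algebra.adjoin ℤ {x} := by
  obtain ⟨B, hB⟩ := exists_powerBasis hx
  subst hB
  refine mem_adjoin_of_smul_prime_pow_smul_of_minpoly_isEisensteinAt (K := ℚ) hp
    (isIntegral_of_quartic a b c d h) hw hpw ?_
  rwa [minpoly_eq_quartic hK hx h]

/-- The derivative of the minimal polynomial lies in the conductor of `ℤ[x]`. -/
lemma derivative_mul_mem_adjoin (x w : 𝓞 K) (hx : ℚ⟮(x : K)⟯ = ⊤) :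
    aeval x (derivative (minpoly ℤ x)) * w ∈ Algebra.adjoin ℤ {x} := by
  have : Algebra.adjoin ℚ {algebraMap (𝓞 K) K x} = ⊤ := by
    rw [← IntermediateField.adjoin_simple_toSubalgebra_of_isAlgebraic
      (Algebra.IsIntegral.isIntegral (R := ℚ) _).isAlgebraic]
    exact (congrArg _ hx).trans IntermediateField.top_toSubalgebra
  have h := conductor_mul_differentIdeal ℤ ℚ K x this
  have h1 : aeval x (derivative (minpoly ℤ x)) ∈ conductor ℤ x :=
    Ideal.mul_le_left (h.symm.le (Ideal.mem_span_singleton_self _))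
  exact h1 w

end Field

/-! ### The order spanned by `1, y, z, u` -/

/-- The `ℤ`-submodule of `A` spanned by `1, y, z, u`, given by explicit combinations. -/
def quadSpan {A : Type*} [CommRing A] (y z u : A) : Submodule ℤ A where
  carrier := {x | ∃ a b c d : ℤ, x = a + b * y + c * z + d * u}
  zero_mem' := ⟨0, 0, 0, 0, by simp⟩
  add_mem' := by
    rintro _ _ ⟨a, b, c, d, rfl⟩ ⟨a', b', c', d', rfl⟩
    exact ⟨a + a', b + b', c + c', d + d', by push_cast; ring⟩
  smul_mem' := by
    rintro n _ ⟨a, b, c, d, rfl⟩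
    exact ⟨n * a, n * b, n * c, n * d, by rw [zsmul_eq_mul]; push_cast; ring⟩

lemma mem_quadSpan {A : Type*} [CommRing A] {y z u x : A} :
    x ∈ quadSpan y z u ↔ ∃ a b c d : ℤ, x = a + b * y + c * z + d * u := Iff.rfl

/-- If multiplication by `x` maps `1, y, z, u` into their span, then that span contains `ℤ[x]`. -/
lemma mem_quadSpan_of_mem_adjoin {A : Type*} [CommRing A] {x y z u w : A}
    (h1 : x ∈ quadSpan y z u) (hy : x * y ∈ quadSpan y z u) (hz : x * z ∈ quadSpan y z u)
    (hu : x * u ∈ quadSpan y z u) (hw : w ∈ Algebra.adjoin ℤ {x}) : w ∈ quadSpan y z u := by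
  have hmul : ∀ t ∈ quadSpan y z u, x * t ∈ quadSpan y z u := by
    rintro _ ⟨a, b, c, d, rfl⟩
    have := add_mem (add_mem (add_mem ((quadSpan y z u).smul_mem a h1)
      ((quadSpan y z u).smul_mem b hy)) ((quadSpan y z u).smul_mem c hz))
      ((quadSpan y z u).smul_mem d hu)
    simp only [zsmul_eq_mul] at this
    convert this using 1
    ring
  have hpow : ∀ n : ℕ, x ^ n ∈ quadSpan y z u := by
    intro n
    induction n with
    | zero => exact ⟨1, 0, 0, 0, by simp⟩
    | succ n ih => rw [pow_succ']; exact hmul _ ih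
  rw [Algebra.adjoin_singleton_eq_range_aeval] at hw
  obtain ⟨f, rfl⟩ := hw
  change aeval x f ∈ _
  rw [aeval_eq_sum_range]
  exact sum_mem fun i _ => (quadSpan y z u).smul_mem _ (hpow i)

/-- The multiplication table of `1, y, z, u`, where `y` is a root of
`Y⁴ - 12DY² - 16kDY + 4D(2 - 3D)` with `k² + 1 = 2D`, `z = y²/2` and `u = (y³ - 6Dy)/4`. -/
structure Table {A : Type*} [CommRing A] (k D : ℤ) (y z u : A) : Prop where
  yy : y * y = 2 * z
  yz : y * z = 2 * u + 3 * D * y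
  yu : y * u = 3 * D * z + 4 * k * D * y - D * (2 - 3 * D)
  zz : z * z = 6 * D * z + 4 * k * D * y - D * (2 - 3 * D)
  zu : z * u = 3 * D * u + 4 * k * D * z + (6 * D ^ 2 - D) * y
  uu : u * u = (6 * D ^ 2 - D) * z + 4 * k * D * u + 6 * k * D ^ 2 * y

section CommRing

variable {A : Type*} [CommRing A] {k D : ℤ} {y z u : A}

namespace Table

lemma quartic_y (T : Table k D y z u) :
    y ^ 4 + (0 : ℤ) * y ^ 3 + (-12 * D : ℤ) * y ^ 2 + (-16 * k * D : ℤ) * y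
      + (4 * D * (2 - 3 * D) : ℤ) = 0 := by
  push_cast
  linear_combination (y ^ 2 + 2 * z - 12 * D) * T.yy + 4 * T.zz

lemma quartic_z (T : Table k D y z u) :
    z ^ 4 + (-12 * D : ℤ) * z ^ 3 + (36 * D ^ 2 + 2 * D * (2 - 3 * D) : ℤ) * z ^ 2
      + (-12 * D ^ 2 * (2 - 3 * D) - 32 * k ^ 2 * D ^ 2 : ℤ) * z
      + (D ^ 2 * (2 - 3 * D) ^ 2 : ℤ) = 0 := by
  push_cast
  linear_combination (z ^ 2 - 6 * D * z + 4 * k * D * y + D * (2 - 3 * D)) * T.zz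
    + 16 * k ^ 2 * D ^ 2 * T.yy

/-- The span of `1, y, 2z, 4u` is stable under multiplication by `y`, so it contains `ℤ[y]`. -/
lemma mem_of_mem_adjoin_y (T : Table k D y z u) {w : A} (hw : w ∈ Algebra.adjoin ℤ {y}) :
    w ∈ quadSpan y (2 * z) (4 * u) := by
  refine mem_quadSpan_of_mem_adjoin ⟨0, 1, 0, 0, ?_⟩ ⟨0, 0, 1, 0, ?_⟩ ⟨0, 6 * D, 0, 1, ?_⟩
    ⟨-4 * D * (2 - 3 * D), 16 * k * D, 6 * D, 0, ?_⟩ hw <;> push_cast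
  · ring
  · linear_combination T.yy
  · linear_combination 2 * T.yz
  · linear_combination 4 * T.yu

/-- The span of `1, y, z, u` is stable under multiplication by `π = u - kD`, so it contains
`ℤ[π]`. -/
lemma mem_of_mem_adjoin_pi (T : Table k D y z u) {w : A}
    (hw : w ∈ Algebra.adjoin ℤ {u - k * D}) : w ∈ quadSpan y z u := by
  refine mem_quadSpan_of_mem_adjoin ⟨-k * D, 0, 0, 1, ?_⟩
    ⟨-D * (2 - 3 * D), 3 * k * D, 3 * D, 0, ?_⟩
    ⟨0, 6 * D ^ 2 - D, 3 * k * D, 3 * D, ?_⟩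
    ⟨0, 6 * k * D ^ 2, 6 * D ^ 2 - D, 3 * k * D, ?_⟩ hw <;> push_cast
  · ring
  · linear_combination T.yu
  · linear_combination T.zu
  · linear_combination T.uu

end Table

end CommRing

section Field

variable {K : Type} [Field K] [CharZero K] {k D : ℤ} {y z u : K}

lemma table_of_root (hk : k ^ 2 + 1 = 2 * D)
    (hy : y ^ 4 - 12 * D * y ^ 2 - 16 * k * D * y + 4 * D * (2 - 3 * D) = 0) :
    Table k D y (y ^ 2 / 2) ((y ^ 3 - 6 * D * y) / 4) := by
  have hk' : (k : K) ^ 2 + 1 = 2 * D := by exact_mod_cast hk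
  constructor
  · ring
  · ring
  · linear_combination hy / 4
  · linear_combination hy / 4
  · linear_combination y * hy / 8
  · linear_combination (y ^ 2 / 16) * hy

namespace Table

/-- The element `u - kD` is a root of `T⁴ - 8kDT³ - 12D²T² + 2D³`, which is Eisenstein at `2`. -/
lemma quartic_pi (T : Table k D y z u) (hk : k ^ 2 + 1 = 2 * D) :
    (u - k * D) ^ 4 + (-8 * k * D : ℤ) * (u - k * D) ^ 3 + (-12 * D ^ 2 : ℤ) * (u - k * D) ^ 2
      + (0 : ℤ) * (u - k * D) + (2 * D ^ 3 : ℤ) = 0 := by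
  have hD : (D : K) = (k ^ 2 + 1) / 2 := by
    have hk' : (k : K) ^ 2 + 1 = 2 * D := by exact_mod_cast hk
    rw [hk']; ring
  obtain ⟨yy, yz, yu, zz, zu, uu⟩ := T
  have e1 : (u - k * D) ^ 2 = (6 * D ^ 2 - D) * z + 2 * k * D * u + 6 * k * D ^ 2 * y
      + k ^ 2 * D ^ 2 := by linear_combination uu
  have e2 : (u - k * D) ^ 2 - 8 * k * D * (u - k * D) - 12 * D ^ 2 =
      (6 * D ^ 2 - D) * z - 6 * k * D * u + 6 * k * D ^ 2 * y + 9 * k ^ 2 * D ^ 2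
        - 12 * D ^ 2 := by linear_combination uu
  have e3 : (u - k * D) ^ 2 * ((u - k * D) ^ 2 - 8 * k * D * (u - k * D) - 12 * D ^ 2)
      = -2 * D ^ 3 := by
    rw [e2, e1]
    rw [hD] at *
    linear_combination
      (6 * ((k ^ 2 + 1) / 2) ^ 2 - ((k ^ 2 + 1) / 2 : K)) ^ 2 * zz
      - 12 * k ^ 2 * ((k ^ 2 + 1) / 2 : K) ^ 2 * uu
      + 36 * k ^ 2 * ((k ^ 2 + 1) / 2 : K) ^ 4 * yy
      - 4 * k * ((k ^ 2 + 1) / 2 : K) * (6 * ((k ^ 2 + 1) / 2) ^ 2 - ((k ^ 2 + 1) / 2 : K)) * zu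
      + 12 * k * ((k ^ 2 + 1) / 2 : K) ^ 2
        * (6 * ((k ^ 2 + 1) / 2) ^ 2 - ((k ^ 2 + 1) / 2 : K)) * yz
      - 24 * k ^ 2 * ((k ^ 2 + 1) / 2 : K) ^ 3 * yu
  push_cast
  linear_combination e3

lemma isIntegral_u (T : Table k D y z u) (hk : k ^ 2 + 1 = 2 * D) : IsIntegral ℤ u := by
  have h := isIntegral_of_quartic _ _ _ _ (T.quartic_pi hk)
  have h2 : IsIntegral ℤ ((k : K) * D) := by
    exact_mod_cast (isIntegral_algebraMap (R := ℤ) (A := K) (x := k * D))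
  simpa using h.add h2

end Table

end Field

section NumberField

variable {K : Type} [Field K] [NumberField K] {k D : ℤ} {y z u : K}

/-- The variant of `derivative_mul_mem_adjoin` for integral elements of `K`. -/
lemma derivative_mul_mem_adjoin' {x w : K} (hx : ℚ⟮x⟯ = ⊤) (hxi : IsIntegral ℤ x)
    (hw : IsIntegral ℤ w) :
    aeval x (derivative (minpoly ℤ x)) * w ∈ Algebra.adjoin ℤ {x} := by
  obtain ⟨x, rfl⟩ : ∃ x' : 𝓞 K, (x' : K) = x := ⟨⟨x, hxi⟩, rfl⟩
  obtain ⟨w, rfl⟩ : ∃ w' : 𝓞 K, (w' : K) = w := ⟨⟨w, hw⟩, rfl⟩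
  have h := derivative_mul_mem_adjoin x w hx
  rw [← RingOfIntegers.minpoly_coe] at h
  rw [Algebra.adjoin_singleton_eq_range_aeval] at h ⊢
  obtain ⟨f, hf⟩ := h
  refine ⟨f, ?_⟩
  have h2 := congrArg (algebraMap (𝓞 K) K) hf
  rw [map_mul, ← aeval_algebraMap_apply] at h2
  rw [← h2]
  change aeval _ f = algebraMap _ _ (aeval x f)
  rw [← aeval_algebraMap_apply]

/-- For squarefree odd `D` the minimal polynomial of `y` is Eisenstein at each prime dividing `D`,
so factors `n` composed of such primes can be cancelled modulo `ℤ[y]`. -/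
lemma mem_adjoin_of_prime_factors (T : Table k D y z u) (hK : Module.finrank ℚ K = 4)
    (hy : ℚ⟮y⟯ = ⊤) (hD : Odd D) (hsf : Squarefree D) (n : ℕ) :
    n ≠ 0 → (∀ p : ℕ, p.Prime → p ∣ n → (p : ℤ) ∣ D) → ∀ w : K, IsIntegral ℤ w →
      (n : ℤ) • w ∈ Algebra.adjoin ℤ {y} → w ∈ Algebra.adjoin ℤ {y} := by
  induction n using induction_on_primes with
  | zero => simp
  | one => intro _ _ w _ h; simpa using h
  | prime_mul p a hp ih =>
    intro h0 hpD w hw h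
    refine ih (by rintro rfl; simp at h0) (fun q hq hqa => hpD q hq (hqa.mul_left p)) w hw ?_
    have hpp : Prime (p : ℤ) := Nat.prime_iff_prime_int.1 hp
    have hpd : (p : ℤ) ∣ D := hpD p hp (dvd_mul_right _ _)
    have he : (quartic 0 (-12 * D) (-16 * k * D) (4 * D * (2 - 3 * D))).IsEisensteinAt
        (Submodule.span ℤ {(p : ℤ)}) := by
      refine quartic_isEisensteinAt hpp (dvd_zero _) (hpd.mul_left _) (hpd.mul_left _)
        ((hpd.mul_left _).mul_right _) ?_
      intro h2
      have hp2 : ¬ (p : ℤ) ∣ 2 := by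
        intro hp2
        have hp2' : p = 2 := (Nat.prime_dvd_prime_iff_eq hp Nat.prime_two).1 (by exact_mod_cast hp2)
        subst hp2'
        obtain ⟨t, ht⟩ := hD
        omega
      obtain ⟨e, he⟩ := hpd
      have : (p : ℤ) ∣ 2 * 2 * e * (2 - 3 * D) := by
        rw [he, pow_two] at h2
        apply Int.dvd_of_mul_dvd_mul_left hpp.ne_zero
        convert h2 using 1
        rw [he]; ring
      rcases hpp.dvd_or_dvd this with h3 | h3
      · rcases hpp.dvd_or_dvd h3 with h4 | h4
        · exact (hpp.dvd_or_dvd h4).elim hp2 hp2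
        · exact hpp.not_isUnit (hsf p (by rw [he]; exact mul_dvd_mul_left _ h4))
      · refine hp2 ?_
        have := dvd_add h3 (Dvd.intro (3 * e) rfl : (p : ℤ) ∣ p * (3 * e))
        rw [he] at this
        rwa [show (2 - 3 * (p * e) + p * (3 * e) : ℤ) = 2 by ring] at this
    refine mem_adjoin_of_prime_pow hK hy T.quartic_y hpp he 1 (hw.smul _) ?_
    rwa [pow_one, smul_smul, ← Nat.cast_mul]

lemma pi_isEisenstein (hD : Odd D) :
    (quartic (-8 * k * D) (-12 * D ^ 2) 0 (2 * D ^ 3)).IsEisensteinAt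
      (Submodule.span ℤ {(2 : ℤ)}) := by
  refine quartic_isEisensteinAt Int.prime_two ⟨-4 * k * D, by ring⟩ ⟨-6 * D ^ 2, by ring⟩
    (dvd_zero _) (dvd_mul_right _ _) ?_
  intro h
  have h2 : (2 : ℤ) ∣ D ^ 3 := by
    apply Int.dvd_of_mul_dvd_mul_left two_ne_zero
    rwa [← pow_two]
  exact (Int.not_even_iff_odd.2 (hD.pow (n := 3))) (even_iff_two_dvd.2 h2)

/-- The elements `1, y, z, u` span the ring of integers. -/
lemma Table.mem_quadSpan_of_isIntegral (T : Table k D y z u) (hk : k ^ 2 + 1 = 2 * D)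
    (hK : Module.finrank ℚ K ≤ 4) (hy : ℚ⟮y⟯ = ⊤) (hD : Odd D) (hsf : Squarefree D)
    {w : K} (hw : IsIntegral ℤ w) : w ∈ quadSpan y z u := by
  have he := pi_isEisenstein (k := k) hD
  obtain ⟨hK4, hpi⟩ := finrank_eq_four_of_eisenstein hK (T.quartic_pi hk) Int.prime_two he
  have hpiint := isIntegral_of_quartic _ _ _ _ (T.quartic_pi hk)
  have hyint := isIntegral_of_quartic _ _ _ _ T.quartic_y
  have hD0 : D ≠ 0 := hsf.ne_zero
  -- The derivative at `y` is `16π` with `π = u - kD`, and `π` divides its norm `2D³`.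
  have h1 : (D ^ 3) • ((32 : ℤ) • w) ∈ Algebra.adjoin ℤ {y} := by
    set π := u - k * D with hπ
    have hπint : IsIntegral ℤ (π ^ 3 + (-8 * k * D : ℤ) • π ^ 2 + (-12 * D ^ 2 : ℤ) • π) :=
      ((hpiint.pow 3).add ((hpiint.pow 2).smul _)).add (hpiint.smul _)
    have h := derivative_mul_mem_adjoin' hy hyint ((hπint.mul hw).neg)
    rw [minpoly_eq_quartic hK4 hy T.quartic_y] at h
    have hder : aeval y (derivative (quartic 0 (-12 * D) (-16 * k * D) (4 * D * (2 - 3 * D))))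
        = 16 * π := by
      simp only [quartic, derivative_mul, derivative_X_pow, derivative_C,
        derivative_X, map_add, map_mul, aeval_X, aeval_C, map_pow]
      simp only [map_zero, hπ]
      simp
      linear_combination (4 * y) * T.yy + 8 * T.yz
    rw [hder] at h
    convert h using 1
    have hq := T.quartic_pi hk
    rw [← hπ] at hq
    simp only [zsmul_eq_mul]
    push_cast at hq ⊢
    linear_combination 16 * w * hq
  have h2 : (32 : ℤ) • w ∈ Algebra.adjoin ℤ {y} := by
    refine mem_adjoin_of_prime_factors T hK4 hy hD hsf (D ^ 3).natAbs (by simpa using hD0) ?_ _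
      (hw.smul _) ?_
    · intro p hp hpn
      exact (Nat.prime_iff_prime_int.1 hp).dvd_of_dvd_pow (Int.natCast_dvd.2 hpn)
    · rcases Int.natAbs_eq (D ^ 3) with h | h
      · rwa [← h]
      · rw [← neg_eq_iff_eq_neg.2 h, neg_smul]
        exact neg_mem h1
  have h3 : (32 : ℤ) • w ∈ quadSpan y z u := by
    obtain ⟨a, b, c, d, h⟩ := T.mem_of_mem_adjoin_y h2
    exact ⟨a, b, 2 * c, 4 * d, by rw [h]; push_cast; ring⟩
  obtain ⟨n, hn0, hn⟩ := exists_int_mul_mem_adjoin hpi hpiint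
  obtain ⟨e, N, hN, rfl⟩ := Nat.exists_eq_two_pow_mul_odd hn0
  have h4 : (N : ℤ) • w ∈ quadSpan y z u := by
    refine T.mem_of_mem_adjoin_pi (mem_adjoin_of_prime_pow hK4 hpi (T.quartic_pi hk)
      Int.prime_two he e (hw.smul _) ?_)
    have := hn w hw
    push_cast at this
    rwa [mul_smul] at this
  have hcop : IsCoprime (32 : ℤ) (N : ℤ) := by
    have : Nat.Coprime (2 ^ 5) N := (Nat.coprime_two_left.2 hN).pow_left 5
    exact_mod_cast Nat.isCoprime_iff_coprime.2 this
  obtain ⟨a, b, hab⟩ := hcop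
  have h5 := add_mem ((quadSpan y z u).smul_mem a h3) ((quadSpan y z u).smul_mem b h4)
  rwa [smul_smul, smul_smul, ← add_smul, hab, one_smul] at h5

end NumberField

/-! ### The index -/

section Index

variable {K : Type} [Field K] [NumberField K] {k D : ℤ} {y z u : K}

/-- The elements `1, y, z, u` are linearly independent over `ℤ`. -/
lemma Table.coeff_eq_zero (T : Table k D y z u) (hK : Module.finrank ℚ K = 4) (hy : ℚ⟮y⟯ = ⊤)
    {a b c d : ℤ} (h : (a : K) + b * y + c * z + d * u = 0) :
    a = 0 ∧ b = 0 ∧ c = 0 ∧ d = 0 := by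
  have hdeg : (minpoly ℚ y).natDegree = 4 := by
    rw [← IntermediateField.adjoin.finrank (Algebra.IsIntegral.isIntegral y), hy,
      IntermediateField.finrank_top', hK]
  let f : ℚ[X] := C (d : ℚ) * X ^ 3 + C (2 * c : ℚ) * X ^ 2 + C (4 * b - 6 * D * d : ℚ) * X
    + C (4 * a : ℚ)
  have hf : aeval y f = 0 := by
    simp [f]
    linear_combination 4 * h + (2 * c + d * y) * T.yy + 2 * d * T.yz
  have hf0 : f = 0 := by
    by_contra hne
    have h1 := natDegree_le_of_dvd (minpoly.dvd ℚ y hf) hne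
    have h2 : f.natDegree ≤ 3 := natDegree_cubic_le
    omega
  have e0 := congrArg (coeff · 0) hf0
  have e1 := congrArg (coeff · 1) hf0
  have e2 := congrArg (coeff · 2) hf0
  have e3 := congrArg (coeff · 3) hf0
  simp [f, coeff_X, coeff_C, coeff_X_pow, -eq_intCast, -map_mul, -map_sub, -map_intCast]
    at e0 e1 e2 e3
  subst e3
  simp at e1
  exact ⟨e0, e1, e2, rfl⟩

/-- The index of `ℤ[y]` is the index of `ℤ ⊕ ℤ ⊕ 2ℤ ⊕ 4ℤ` in `ℤ⁴`, in the coordinates given by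
the integral basis `1, y, z, u`. -/
lemma orderIndex_eq_eight (y z u : 𝓞 K) (T : Table k D (y : K) (z : K) (u : K))
    (hK : Module.finrank ℚ K = 4) (hy : ℚ⟮(y : K)⟯ = ⊤)
    (hspan : ∀ w : K, IsIntegral ℤ w → w ∈ quadSpan (y : K) (z : K) (u : K)) :
    orderIndex K y = 8 := by
  let s : (ℤ × ℤ × ℤ × ℤ) →+ 𝓞 K :=
    { toFun := fun v => v.1 + v.2.1 * y + v.2.2.1 * z + v.2.2.2 * u
      map_zero' := by simp
      map_add' := by intro v w; simp; ring }
  have hs : Function.Surjective s := by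
    intro w
    obtain ⟨a, b, c, d, h⟩ := hspan w w.isIntegral_coe
    exact ⟨(a, b, c, d), RingOfIntegers.ext (by simp [s, h])⟩
  let φ : (ℤ × ℤ × ℤ × ℤ) →+ ZMod 2 × ZMod 4 :=
    { toFun := fun v => (v.2.2.1, v.2.2.2)
      map_zero' := by simp
      map_add' := by intro v w; simp }
  have hφ : Function.Surjective φ := by
    rintro ⟨c, d⟩
    obtain ⟨c, rfl⟩ := ZMod.intCast_surjective c
    obtain ⟨d, rfl⟩ := ZMod.intCast_surjective d
    exact ⟨(0, 0, c, d), rfl⟩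
  have hcomap : (Algebra.adjoin ℤ {y}).toSubring.toAddSubgroup.comap s = φ.ker := by
    ext ⟨a, b, c, d⟩
    have hker : (a, b, c, d) ∈ φ.ker ↔ (2 : ℤ) ∣ c ∧ (4 : ℤ) ∣ d := by
      rw [AddMonoidHom.mem_ker]
      change ((c : ZMod 2), (d : ZMod 4)) = (0, 0) ↔ _
      rw [Prod.mk.injEq, ZMod.intCast_zmod_eq_zero_iff_dvd, ZMod.intCast_zmod_eq_zero_iff_dvd]
      rfl
    rw [hker]
    change (a : 𝓞 K) + b * y + c * z + d * u ∈ Algebra.adjoin ℤ {y} ↔ _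
    constructor
    · intro h
      have h' : ((a : K) + b * y + c * z + d * u) ∈ Algebra.adjoin ℤ {(y : K)} := by
        rw [Algebra.adjoin_singleton_eq_range_aeval] at h ⊢
        obtain ⟨f, hf⟩ := h
        refine ⟨f, ?_⟩
        change aeval (algebraMap (𝓞 K) K y) f = _
        rw [aeval_algebraMap_apply]
        have := congrArg (algebraMap (𝓞 K) K) hf
        simpa using this
      obtain ⟨a', b', c', d', h2⟩ := T.mem_of_mem_adjoin_y h'
      obtain ⟨-, -, hc, hd⟩ := T.coeff_eq_zero hK hy
        (a := a - a') (b := b - b') (c := c - 2 * c') (d := d - 4 * d')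
        (by push_cast; linear_combination h2)
      exact ⟨⟨c', by omega⟩, ⟨d', by omega⟩⟩
    · rintro ⟨⟨c', rfl⟩, ⟨d', rfl⟩⟩
      have hy' : y ∈ Algebra.adjoin ℤ {y} := Algebra.self_mem_adjoin_singleton ℤ y
      have hw : ((2 * c' : ℤ) : 𝓞 K) * z + ((4 * d' : ℤ) : 𝓞 K) * u
          = c' * y ^ 2 + d' * (y ^ 3 - ((6 * D : ℤ) : 𝓞 K) * y) := by
        apply RingOfIntegers.ext
        simp only [map_add, map_sub, map_mul, map_pow, map_intCast]
        push_cast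
        linear_combination (-c' - d' * y : K) * T.yy - 2 * d' * T.yz
      rw [add_assoc, hw]
      have hint (n : ℤ) : (n : 𝓞 K) ∈ Algebra.adjoin ℤ {y} := intCast_mem _ n
      exact add_mem (add_mem (hint a) (mul_mem (hint b) hy'))
        (add_mem (mul_mem (hint c') (pow_mem hy' 2))
          (mul_mem (hint d') (sub_mem (pow_mem hy' 3) (mul_mem (hint _) hy'))))
  unfold orderIndex
  rw [← AddSubgroup.index_comap_of_surjective _ hs, hcomap, AddSubgroup.index_ker,
    AddMonoidHom.range_eq_top.2 hφ]
  simp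

end Index

lemma exists_of_padicValInt {m : ℤ} (hm : 1 ≤ m) (hv : padicValInt 2 m = 2) :
    ∃ k D : ℤ, m = 4 * k ∧ k ^ 2 + 1 = 2 * D ∧ Odd D := by
  have : Fact (Nat.Prime 2) := ⟨Nat.prime_two⟩
  have h4 := (padicValInt_dvd_iff (p := 2) 2 m).2 (Or.inr hv.ge)
  have h8 : ¬ ((2 : ℕ) : ℤ) ^ 3 ∣ m := by
    rw [padicValInt_dvd_iff, hv]; omega
  norm_num at h4 h8
  obtain ⟨k, rfl⟩ := h4
  obtain ⟨j, rfl⟩ : Odd k := by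
    rw [← Int.not_even_iff_odd]
    rintro ⟨t, rfl⟩
    exact h8 ⟨t, by ring⟩
  exact ⟨2 * j + 1, 2 * j ^ 2 + 2 * j + 1, rfl, by ring, ⟨j ^ 2 + j, by ring⟩⟩

lemma oddPart_eq {D : ℤ} (hD : Odd D) (n : ℕ) (hn : n = 32 * D.natAbs) :
    oddPart n = D.natAbs := by
  have hD' : ¬ 2 ∣ D.natAbs := by
    obtain ⟨t, rfl⟩ := hD; omega
  have hfac : n.factorization 2 = 5 := by
    have h0 : D.natAbs ≠ 0 := by rintro h; simp [h] at hD'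
    rw [hn, show (32 : ℕ) = 2 ^ 5 by norm_num, Nat.factorization_mul (by norm_num) h0]
    simp only [Finsupp.add_apply, Nat.factorization_eq_zero_of_not_dvd hD',
      Nat.prime_two.factorization_pow, Finsupp.single_eq_same]
  rw [oddPart, hfac, hn]
  norm_num

theorem stmt_11 (m : ℤ) (hm : 1 ≤ m) (hv : padicValInt 2 m = 2)
    (hsf : Squarefree (oddPart ((m ^ 2 + 16).natAbs)))
    (K : Type) [Field K] [NumberField K] (θ : 𝓞 K)
    (hθ : Polynomial.aeval (θ : K) (Pm m) = 0)
    (hgen : IntermediateField.adjoin ℚ {(θ : K)} = ⊤) :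
    orderIndex K θ = 8 := by
  obtain ⟨k, D, rfl, hk, hD⟩ := exists_of_padicValInt hm hv
  have hsfD : Squarefree D := by
    rw [oddPart_eq hD _ (by
      rw [show (4 * k) ^ 2 + 16 = 32 * D by linear_combination 16 * hk, Int.natAbs_mul]; rfl)] at hsf
    exact Int.squarefree_natAbs.1 hsf
  have hK : Module.finrank ℚ K ≤ 4 := by
    have hdeg : (Pm (4 * k)).natDegree = 4 := by unfold Pm; compute_degree!
    have hne : Pm (4 * k) ≠ 0 := by
      intro h; rw [h] at hdeg; simp at hdeg
    rw [← IntermediateField.finrank_top' (F := ℚ) (E := K), ← hgen,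
      IntermediateField.adjoin.finrank (Algebra.IsIntegral.isIntegral _), ← hdeg]
    exact natDegree_le_of_dvd (minpoly.dvd ℚ _ hθ) hne
  -- The shift `y = θ - k` removes the cubic term and generates the same order and field.
  have hadj : Algebra.adjoin ℤ {θ - (k : 𝓞 K)} = Algebra.adjoin ℤ {θ} := by
    apply le_antisymm <;> rw [Algebra.adjoin_le_iff, Set.singleton_subset_iff]
    · exact sub_mem (Algebra.self_mem_adjoin_singleton ℤ θ) (intCast_mem _ k)
    · have h := add_mem (Algebra.self_mem_adjoin_singleton ℤ (θ - (k : 𝓞 K)))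
        (intCast_mem (Algebra.adjoin ℤ {θ - (k : 𝓞 K)}) k)
      simpa using h
  have hcoe : ((θ - (k : 𝓞 K) : 𝓞 K) : K) = (θ : K) - k := by simp
  have hy : ℚ⟮((θ - (k : 𝓞 K) : 𝓞 K) : K)⟯ = ⊤ := by
    rw [eq_top_iff, ← hgen, IntermediateField.adjoin_simple_le_iff]
    have h := add_mem (IntermediateField.mem_adjoin_simple_self ℚ
      ((θ - (k : 𝓞 K) : 𝓞 K) : K)) (intCast_mem (ℚ⟮((θ - (k : 𝓞 K) : 𝓞 K) : K)⟯) k)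
    rwa [hcoe, sub_add_cancel, ← hcoe] at h
  have hroot : ((θ - (k : 𝓞 K) : 𝓞 K) : K) ^ 4 - 12 * D * ((θ - (k : 𝓞 K) : 𝓞 K) : K) ^ 2
      - 16 * k * D * ((θ - (k : 𝓞 K) : 𝓞 K) : K) + 4 * D * (2 - 3 * D) = 0 := by
    have hk' : (D : K) = (k ^ 2 + 1) / 2 := by
      have : (k : K) ^ 2 + 1 = 2 * D := by exact_mod_cast hk
      rw [this]; ring
    have h6 : aeval (θ : K) (6 : ℚ[X]) = 6 := map_ofNat _ 6
    simp [Pm, h6] at hθ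
    rw [hcoe, hk']
    linear_combination hθ
  have T := table_of_root hk hroot
  obtain ⟨hK4, -⟩ := finrank_eq_four_of_eisenstein hK (T.quartic_pi hk) Int.prime_two
    (pi_isEisenstein hD)
  have hspan : ∀ w : K, IsIntegral ℤ w → _ := fun w hw =>
    T.mem_quadSpan_of_isIntegral hk hK hy hD hsfD hw
  have key := orderIndex_eq_eight (θ - (k : 𝓞 K)) ⟨_, isIntegral_of_quartic _ _ _ _ T.quartic_z⟩
    ⟨_, T.isIntegral_u hk⟩ T hK4 hy hspan
  unfold orderIndex at key ⊢
  rwa [hadj] at key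
end

section
/- Let m be a positive integer with v_2(m) ≥ 3 and the odd part of m^2 + 16 squarefree, let θ be a root of P_m(x) = x^4 - m x^3 - 6 x^2 + m x + 1, and K = ℚ(θ). Then [O_K : ℤ[θ]] = 16. -/
open Polynomial IntermediateField NumberField

/-!
Write `m = 8k` and `d = 4k² + 1`, so that `m² + 16 = 16 d` with `d` odd and squarefree. Put
`2s = θ - θ⁻¹ - 4k` and `α = θ - 2k - s`. Then `s² = d` and `α² = 2d + 4ks = 2 s (s + 2k)`, where
`s + 2k` is a unit, so `K = ℚ(s, α)` is a quadratic extension of `ℚ(√d)`.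

The polynomial `P_m(X + 2k)` is Eisenstein at each prime dividing `d`, hence irreducible, and
`θ ↦ (θ - 1)/(θ + 1)` extends to an endomorphism `σ` of `K` (`exists_automorphism`). It satisfies
`σ s = -s` and `σ² α = -α`. Integrality of the relative trace, the relative norm and the square of
the `α`-part of an integral `x`, combined with the description of the integers of `ℚ(√d)`, gives
`𝓞 K = ℤ[ω] ⊕ ℤ[ω] α` with `ω = (1 + s)/2` (`integral_coordinates`).

The order `ℤ[θ]` is spanned by `1, s + α, 2s, 2sα` (`mem_adjoin_iff`). Writing
`x = (A + B s)/2 + (C + D s)/2 · α`, it is therefore the kernel of the surjective homomorphism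
`x ↦ (B - C, D)` from `𝓞 K` to `ZMod 4 × ZMod 4`, so its index is 16.
-/

/-! ### Integers of quadratic fields -/

/-- If `d` is squarefree and `d q²` is an integer, then so is the rational number `q`. -/
lemma exists_int_of_squarefree {d : ℤ} (hd : Squarefree d) (q : ℚ) (n : ℤ)
    (h : d * q ^ 2 = n) : ∃ e : ℤ, q = e := by
  have h1 : IsIntegral ℤ ((d : ℚ) * q) := by
    refine IsIntegral.of_pow (n := 2) two_pos ?_
    have : ((d : ℚ) * q) ^ 2 = ((d * n : ℤ) : ℚ) := by push_cast; rw [← h]; ring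
    rw [this]
    exact isIntegral_algebraMap (A := ℚ) (x := d * n)
  obtain ⟨e, he⟩ := IsIntegrallyClosed.isIntegral_iff.mp h1
  simp only [algebraMap_int_eq, eq_intCast] at he
  have hd0 : (d : ℚ) ≠ 0 := by exact_mod_cast hd.ne_zero
  have h2 : e ^ 2 = d * n := by
    have : ((e : ℚ)) ^ 2 = d * n := by rw [he, ← h]; ring
    exact_mod_cast this
  have h3 : d ∣ e := (hd.dvd_pow_iff_dvd two_ne_zero).mp ⟨n, h2⟩
  obtain ⟨f, rfl⟩ := h3
  refine ⟨f, ?_⟩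
  push_cast at he
  exact (mul_left_cancel₀ hd0 he).symm

lemma exists_int_of_isIntegral {K : Type*} [Field K] [CharZero K] [Algebra ℚ K] (q : ℚ)
    (h : IsIntegral ℤ (q : K)) : ∃ e : ℤ, q = e := by
  have h1 : IsIntegral ℤ q := by
    rw [← isIntegral_algebraMap_iff (algebraMap ℚ K).injective]
    simpa using h
  obtain ⟨e, he⟩ := IsIntegrallyClosed.isIntegral_iff.mp h1
  exact ⟨e, by simpa using he.symm⟩

lemma isIntegral_conj {K : Type*} [Field K] [CharZero K] [Algebra ℚ K] (s : K) (σ : K →ₐ[ℚ] K)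
    (hσ : σ s = -s) (a b : ℚ) (h : IsIntegral ℤ ((a : K) + b * s)) :
    IsIntegral ℤ ((a : K) - b * s) := by
  have := h.map (σ.restrictScalars ℤ)
  simpa [hσ, ← sub_eq_add_neg] using this

/-- Integers of `ℚ(√d)` for squarefree `d ≡ 1 mod 4`, inside a field `K` in which conjugation of
`s = √d` extends to an endomorphism `σ`: they have the form `(A + B s) / 2` with `A ≡ B mod 2`. -/
lemma quadratic_integers {K : Type*} [Field K] [CharZero K] [Algebra ℚ K] {d : ℤ}
    (hd : Squarefree d) (hd4 : d % 4 = 1) (s : K) (σ : K →ₐ[ℚ] K) (hs : s ^ 2 = d)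
    (hσ : σ s = -s) (a b : ℚ) (h : IsIntegral ℤ ((a : K) + b * s)) :
    ∃ A B : ℤ, 2 * a = A ∧ 2 * b = B ∧ 2 ∣ A - B := by
  have h' := isIntegral_conj s σ hσ a b h
  have h1 : IsIntegral ℤ (((2 * a : ℚ)) : K) := by
    have e : ((2 * a : ℚ) : K) = ((a : K) + b * s) + ((a : K) - b * s) := by
      push_cast; ring
    rw [e]
    exact h.add h'
  have h2 : IsIntegral ℤ (((a ^ 2 - d * b ^ 2 : ℚ)) : K) := by
    have e : ((a ^ 2 - d * b ^ 2 : ℚ) : K) = ((a : K) + b * s) * ((a : K) - b * s) := by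
      push_cast; linear_combination (b : K) ^ 2 * hs
    rw [e]
    exact h.mul h'
  obtain ⟨A, hA⟩ := exists_int_of_isIntegral _ h1
  obtain ⟨N, hN⟩ := exists_int_of_isIntegral _ h2
  obtain ⟨B, hB⟩ := exists_int_of_squarefree hd (2 * b) (A ^ 2 - 4 * N) (by
    push_cast; rw [← hA, ← hN]; ring)
  refine ⟨A, B, hA, hB, ?_⟩
  have h3 : A ^ 2 - d * B ^ 2 = 4 * N := by
    have : (A : ℚ) ^ 2 - d * B ^ 2 = 4 * N := by rw [← hA, ← hB, ← hN]; ring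
    exact_mod_cast this
  obtain ⟨c, hc⟩ : ∃ c, d = 4 * c + 1 := ⟨d / 4, by omega⟩
  have h4 : Even (A ^ 2 - B ^ 2) := ⟨2 * N + 2 * c * B ^ 2, by rw [hc] at h3; linarith⟩
  rw [← even_iff_two_dvd]
  simpa [Int.even_sub, Int.even_pow] using h4

/-! ### Integral elements of the quartic field -/

/-- The congruences that remain once the relative trace, the relative norm and the coefficient
of `α` are known to be integral. Here `x = (A + B s)/4 + (C + D s)/4 · α`, and `hM`, `hN`, `hMN` say
that its relative norm is `(M + N s)/2` with `M ≡ N mod 2`. -/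
lemma parity_descent {k d A B C D M N : ℤ} (hd : d = 4 * k ^ 2 + 1)
    (hCD : 2 ∣ C - D)
    (hM : A ^ 2 + d * B ^ 2 - 2 * d * (C ^ 2 + d * D ^ 2) - 8 * k * d * C * D = 8 * M)
    (hN : 2 * A * B - 4 * C * D * d - 4 * k * (C ^ 2 + d * D ^ 2) = 8 * N)
    (hMN : 2 ∣ M - N) (hAB : 2 ∣ A - B) :
    ∃ A' B' C' D' : ℤ, A = 2 * A' ∧ B = 2 * B' ∧ C = 2 * C' ∧ D = 2 * D' ∧
      2 ∣ A' - B' ∧ 2 ∣ C' - D' := by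
  obtain ⟨x, hx⟩ := hAB
  obtain ⟨z, hz⟩ := hCD
  obtain ⟨w, hw⟩ := hMN
  obtain rfl : A = B + 2 * x := by linarith
  obtain rfl : C = D + 2 * z := by linarith
  obtain rfl : M = N + 2 * w := by linarith
  have hdo : ¬ Even d := by
    rw [Int.not_even_iff_odd]
    exact ⟨2 * k ^ 2, by linarith⟩
  have hB : Even B := by
    have : Even ((B + 2 * x) * B) :=
      ⟨(D + 2 * z) * D * d + k * ((D + 2 * z) ^ 2 + d * D ^ 2) + 2 * N, by linarith⟩
    simpa [Int.even_mul, Int.even_add] using this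
  obtain ⟨B', rfl⟩ := hB
  have hD : Even D := by
    have : Even ((D + 2 * z) * D * d) :=
      ⟨(B' + x) * B' - N - k * (D ^ 2 * (1 + 2 * k ^ 2) + 2 * D * z + 2 * z ^ 2), by
        subst hd; linarith⟩
    simpa [Int.even_mul, Int.even_add, hdo] using this
  obtain ⟨D', rfl⟩ := hD
  have hx : Even x := by
    have : Even (x ^ 2) := ⟨N + 2 * w - (B' ^ 2 + 2 * k ^ 2 * B' ^ 2 + B' * x)
        + d * ((D' + z) ^ 2 + d * D' ^ 2) + 4 * k * d * (D' + z) * D', by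
        subst hd; linarith⟩
    simpa [Int.even_pow] using this
  obtain ⟨X, rfl⟩ := hx
  have hz : Even z := by
    have : Even (d * z ^ 2) := by
      subst hd
      refine ⟨k ^ 2 * B' ^ 2 + X ^ 2 - 2 * k * (4 * k ^ 2 + 1) * (D' + z) * D'
        + (D' + z) * D' * (4 * k ^ 2 + 1) + k * ((D' + z) ^ 2 + (4 * k ^ 2 + 1) * D' ^ 2) - w
        - (4 * k ^ 2 + 1) * D' * z - (4 * k ^ 2 + 1) * (1 + 2 * k ^ 2) * D' ^ 2, ?_⟩
      linarith
    simpa [Int.even_mul, Int.even_pow, hdo] using this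
  obtain ⟨Z, rfl⟩ := hz
  exact ⟨B' + (X + X), B', D' + (Z + Z), D', by ring, by ring, by ring, by ring,
    ⟨X, by ring⟩, ⟨Z, by ring⟩⟩

/-- Every integral element of `K = ℚ(s, α)` is `(A + B s)/2 + (C + D s)/2 · α` with `A ≡ B` and
`C ≡ D` modulo 2, i.e. lies in `ℤ[ω] ⊕ ℤ[ω] α`, `ω = (1 + s)/2`. -/
lemma integral_coordinates {K : Type*} [Field K] [CharZero K] [Algebra ℚ K] {d k : ℤ}
    (hdk : d = 4 * k ^ 2 + 1) (hd : Squarefree d) (s α : K) (σ : K →ₐ[ℚ] K) (hs : s ^ 2 = d)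
    (hα : α ^ 2 = 2 * d + 4 * k * s) (hσ : σ s = -s) (hτ : σ (σ α) = -α) (p q r t : ℚ)
    (h : IsIntegral ℤ ((p : K) + q * s + (r + t * s) * α)) :
    ∃ A B C D : ℤ, 2 * p = A ∧ 2 * q = B ∧ 2 * r = C ∧ 2 * t = D ∧
      2 ∣ A - B ∧ 2 ∣ C - D := by
  have hd4 : d % 4 = 1 := by omega
  have hdo : ¬ Even d := by
    rw [Int.not_even_iff_odd]
    exact ⟨2 * k ^ 2, by linarith⟩
  have hdk' : (d : K) = 4 * k ^ 2 + 1 := by rw [hdk]; push_cast; ring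
  have hconj : IsIntegral ℤ ((p : K) + q * s - (r + t * s) * α) := by
    have := (h.map (σ.restrictScalars ℤ)).map (σ.restrictScalars ℤ)
    simpa [hσ, hτ, ← sub_eq_add_neg] using this
  have his : IsIntegral ℤ s := by
    refine IsIntegral.of_pow (n := 2) two_pos ?_
    rw [hs]
    exact isIntegral_algebraMap (A := K) (x := d)
  have hik : IsIntegral ℤ (2 * k : K) := by
    have := isIntegral_algebraMap (R := ℤ) (A := K) (x := 2 * k)
    simpa using this
  -- the relative trace `x + τ x`, where `τ = σ ∘ σ`
  obtain ⟨A, B, hA, hB, hAB⟩ := quadratic_integers hd hd4 s σ hs hσ (2 * p) (2 * q) (by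
    have e : ((2 * p : ℚ) : K) + ((2 * q : ℚ) : K) * s =
        ((p : K) + q * s + (r + t * s) * α) + ((p : K) + q * s - (r + t * s) * α) := by
      push_cast; ring
    rw [e]
    exact h.add hconj)
  -- the relative norm `x * τ x`
  obtain ⟨M, N, hM, hN, hMN⟩ := quadratic_integers hd hd4 s σ hs hσ
    (p ^ 2 + d * q ^ 2 - 2 * d * (r ^ 2 + d * t ^ 2) - 8 * k * d * r * t)
    (2 * p * q - 4 * r * t * d - 4 * k * (r ^ 2 + d * t ^ 2)) (by
    have e : ((p ^ 2 + d * q ^ 2 - 2 * d * (r ^ 2 + d * t ^ 2) - 8 * k * d * r * t : ℚ) : K) +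
        ((2 * p * q - 4 * r * t * d - 4 * k * (r ^ 2 + d * t ^ 2) : ℚ) : K) * s =
        ((p : K) + q * s + (r + t * s) * α) * ((p : K) + q * s - (r + t * s) * α) := by
      push_cast
      linear_combination (((r : K) + t * s) ^ 2) * hα - (q : K) ^ 2 * hs
        + (2 * d * (t : K) ^ 2 + 4 * k * (2 * r * t) + 4 * k * t ^ 2 * s) * hs
    rw [e]
    exact h.mul hconj)
  -- the coefficient of `α`: the square of `x - τ x`, divided by the unit `s + 2k`,
  -- whose inverse is `s - 2k`
  have hv2 : IsIntegral ℤ (((2 * (r + t * s) * α) ^ 2 : K)) := by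
    have e : (2 * (r + t * s) * α : K) =
        ((p : K) + q * s + (r + t * s) * α) - ((p : K) + q * s - (r + t * s) * α) := by ring
    rw [e]
    exact (h.sub hconj).pow 2
  have hv2e : ((2 * (r + t * s) * α) ^ 2 * (s - 2 * k) : K) =
      ((16 * d * r * t : ℚ) : K) + ((8 * (r ^ 2 + d * t ^ 2) : ℚ) : K) * s := by
    have e2 : α ^ 2 * (s - 2 * k) = 2 * s := by
      rw [hα]
      linear_combination (4 * k : K) * hs + 2 * s * hdk'
    push_cast
    linear_combination (4 * ((r : K) + t * s) ^ 2) * e2 + (16 * r * t + 8 * t ^ 2 * s) * hs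
  have hiv := hv2.mul (his.sub hik)
  rw [hv2e] at hiv
  obtain ⟨M1, N1, -, hN1, -⟩ := quadratic_integers hd hd4 s σ hs hσ _ _ hiv
  -- its norm to `ℚ` is `-d * (8 * (r² - d t²))²`
  obtain ⟨n, hn⟩ := exists_int_of_isIntegral (K := K) (d * (8 * (r ^ 2 - d * t ^ 2)) ^ 2) (by
    have e : ((d * (8 * (r ^ 2 - d * t ^ 2)) ^ 2 : ℚ) : K) =
       - ((((16 * d * r * t : ℚ) : K) + ((8 * (r ^ 2 + d * t ^ 2) : ℚ) : K) * s) *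
         (((16 * d * r * t : ℚ) : K) - ((8 * (r ^ 2 + d * t ^ 2) : ℚ) : K) * s)) := by
      push_cast
      linear_combination -(64 * ((r : K) ^ 2 + d * t ^ 2) ^ 2) * hs
    rw [e]
    exact (hiv.mul (isIntegral_conj s σ hσ _ _ hiv)).neg)
  obtain ⟨e, he⟩ := exists_int_of_squarefree hd _ _ hn
  obtain ⟨c, hc⟩ := exists_int_of_squarefree squarefree_one (8 * r) (2 * (N1 + 2 * e)) (by
    push_cast; rw [← he, ← hN1]; ring)
  obtain ⟨c', hc'⟩ := exists_int_of_squarefree hd (8 * t) (2 * (N1 - 2 * e)) (by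
    push_cast; rw [← he, ← hN1]; ring)
  have hce : Even c := by
    have h1 : c ^ 2 = 2 * (N1 + 2 * e) := by
      have : (c : ℚ) ^ 2 = 2 * (N1 + 2 * e) := by rw [← hc, ← he, ← hN1]; ring
      exact_mod_cast this
    have : Even (c ^ 2) := ⟨N1 + 2 * e, by linarith⟩
    simpa [Int.even_pow] using this
  have hce' : Even c' := by
    have h1 : d * c' ^ 2 = 2 * (N1 - 2 * e) := by
      have : (d : ℚ) * c' ^ 2 = 2 * (N1 - 2 * e) := by rw [← hc', ← he, ← hN1]; ring
      exact_mod_cast this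
    have : Even (d * c' ^ 2) := ⟨N1 - 2 * e, by linarith⟩
    simpa [Int.even_mul, Int.even_pow, hdo] using this
  obtain ⟨C, rfl⟩ := hce
  obtain ⟨D, rfl⟩ := hce'
  push_cast at hc hc'
  have hp : p = A / 4 := by linarith
  have hq : q = B / 4 := by linarith
  have hr : r = C / 4 := by linarith
  have ht : t = D / 4 := by linarith
  subst hp hq hr ht
  have hCD : 2 ∣ C - D := by
    have h1 : C ^ 2 - d * D ^ 2 = 2 * e := by
      have : (C : ℚ) ^ 2 - d * D ^ 2 = 2 * e := by rw [← he]; ring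
      exact_mod_cast this
    have : Even (C ^ 2 - d * D ^ 2) := ⟨e, by linarith⟩
    rw [← even_iff_two_dvd]
    simpa [Int.even_sub, Int.even_mul, Int.even_pow, hdo] using this
  obtain ⟨A', B', C', D', rfl, rfl, rfl, rfl, h1, h2⟩ :=
    parity_descent (M := M) (N := N) hdk hCD
      (by
        have : (A : ℚ) ^ 2 + d * B ^ 2 - 2 * d * (C ^ 2 + d * D ^ 2) - 8 * k * d * C * D = 8 * M := by
          rw [← hM]; ring
        exact_mod_cast this)
      (by
        have : 2 * (A : ℚ) * B - 4 * C * D * d - 4 * k * (C ^ 2 + d * D ^ 2) = 8 * N := by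
          rw [← hN]; ring
        exact_mod_cast this) hMN hAB
  refine ⟨A', B', C', D', ?_, ?_, ?_, ?_, h1, h2⟩ <;> push_cast <;> ring

/-! ### Coordinates with respect to `1, s, α, sα` -/

/-- Linear independence of `1, s, α, sα` over `ℚ`, read off from the action of `σ` and `σ ∘ σ`. -/
lemma coordinates_eq_zero {K : Type*} [Field K] [CharZero K] [Algebra ℚ K] {s α : K}
    (σ : K →ₐ[ℚ] K) (hs : s ≠ 0) (hα : α ≠ 0) (hσ : σ s = -s) (hτ : σ (σ α) = -α)
    (p q r t : ℚ) (h : (p : K) + q * s + (r + t * s) * α = 0) :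
    p = 0 ∧ q = 0 ∧ r = 0 ∧ t = 0 := by
  have key : ∀ a b : ℚ, (a : K) + b * s = 0 → a = 0 ∧ b = 0 := by
    intro a b hab
    have h1 := congrArg σ hab
    simp only [map_add, map_mul, map_ratCast, hσ, map_zero] at h1
    have ha : (2 * a : K) = 0 := by linear_combination hab + h1
    have hb : (2 * b : K) * s = 0 := by linear_combination hab - h1
    simp only [mul_eq_zero, hs, or_false, OfNat.ofNat_ne_zero, false_or, Rat.cast_eq_zero]
      at ha hb
    exact ⟨ha, hb⟩
  have h1 := congrArg (fun x => σ (σ x)) h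
  simp only [map_add, map_mul, map_ratCast, hσ, hτ, map_zero, map_neg, neg_neg] at h1
  have h2 : (p : K) + q * s = 0 := by linear_combination (1 / 2 : K) * h + (1 / 2 : K) * h1
  have h3 : ((r : K) + t * s) * α = 0 := by linear_combination h - h2
  have h4 := (mul_eq_zero.mp h3).resolve_right hα
  exact ⟨(key _ _ h2).1, (key _ _ h2).2, (key _ _ h4).1, (key _ _ h4).2⟩

lemma exists_coordinates {K : Type*} [Field K] [CharZero K] [Algebra ℚ K] {d k : ℤ} {s α θ : K}
    (hs : s ^ 2 = d) (hα : α ^ 2 = 2 * d + 4 * k * s) (hθ : θ = 2 * k + s + α)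
    (htop : Algebra.adjoin ℚ {θ} = ⊤) (x : K) :
    ∃ p q r t : ℚ, x = (p : K) + q * s + (r + t * s) * α := by
  have hx : x ∈ Algebra.adjoin ℚ {θ} := htop ▸ Algebra.mem_top
  induction hx using Algebra.adjoin_induction with
  | mem x hx =>
    obtain rfl := hx
    exact ⟨2 * k, 1, 1, 0, by rw [hθ]; push_cast; ring⟩
  | algebraMap c => exact ⟨c, 0, 0, 0, by simp⟩
  | add x y _ _ hx hy =>
    obtain ⟨p, q, r, t, rfl⟩ := hx
    obtain ⟨p', q', r', t', rfl⟩ := hy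
    exact ⟨p + p', q + q', r + r', t + t', by push_cast; ring⟩
  | mul x y _ _ hx hy =>
    obtain ⟨p, q, r, t, rfl⟩ := hx
    obtain ⟨p', q', r', t', rfl⟩ := hy
    refine ⟨p * p' + d * (q * q') + 2 * d * (r * r' + d * t * t')
        + 4 * k * d * (r * t' + t * r'),
      p * q' + q * p' + 4 * k * (r * r' + d * t * t') + 2 * d * (r * t' + t * r'),
      p * r' + r * p' + d * (q * t' + t * q'),
      p * t' + t * p' + q * r' + r * q', ?_⟩
    push_cast
    linear_combination ((r : K) + t * s) * (r' + t' * s) * hα +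
      ((q : K) * q' + α * (q * t' + t * q') + 2 * d * t * t' +
        4 * k * (r * t' + t * r') + 4 * k * t * t' * s) * hs

/-! ### Irreducibility and the cyclic automorphism -/

lemma squarefree_of_oddPart {k : ℤ} (h : Squarefree (oddPart (((8 * k) ^ 2 + 16).natAbs))) :
    Squarefree (4 * k ^ 2 + 1) := by
  have h1 : ((8 * k) ^ 2 + 16).natAbs = 2 ^ 4 * (4 * k ^ 2 + 1).natAbs := by
    rw [show (8 * k) ^ 2 + 16 = 2 ^ 4 * (4 * k ^ 2 + 1) by ring, Int.natAbs_mul]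
    rfl
  have h2 : ¬ 2 ∣ (4 * k ^ 2 + 1).natAbs := by omega
  rw [h1, oddPart, Nat.ordCompl_pow_mul_of_not_dvd 4 Nat.prime_two h2] at h
  exact Int.squarefree_natAbs.mp h

/-- The polynomial is `P_m(X + 2k)` with `m = 8k`; it is Eisenstein at every prime divisor of `d`. -/
lemma irreducible_shifted {d k : ℤ} (hdk : d = 4 * k ^ 2 + 1) (hk : k ≠ 0) (hd : Squarefree d) :
    Irreducible (X ^ 4 + C (-6 * d) * X ^ 2 + C (-16 * k * d) * X + C (d * (4 - 3 * d)) : ℤ[X]) := by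
  set f : ℤ[X] := X ^ 4 + C (-6 * d) * X ^ 2 + C (-16 * k * d) * X + C (d * (4 - 3 * d)) with hf
  have hdeg : f.natDegree = 4 := by rw [hf]; compute_degree!
  have hmon : f.Monic := by rw [hf]; monicity!
  obtain ⟨p, hp, hpd⟩ : ∃ p : ℤ, Prime p ∧ p ∣ d := by
    obtain ⟨p, hp, hpd⟩ := Int.exists_prime_and_dvd (n := d) (by
      have : 0 < k ^ 2 := by positivity
      omega)
    exact ⟨p, hp, hpd⟩
  have hprime : (Ideal.span {p}).IsPrime := (Ideal.span_singleton_prime hp.ne_zero).mpr hp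
  have hp4 : ¬ p ∣ 4 := by
    intro h
    have h2 : p ∣ 2 := hp.dvd_of_dvd_pow (n := 2) (by norm_num; exact h)
    have : p ∣ 1 := by
      have : p ∣ d - 2 * (2 * k ^ 2) := dvd_sub hpd (h2.mul_right _)
      rwa [show d - 2 * (2 * k ^ 2) = 1 by rw [hdk]; ring] at this
    exact hp.not_isUnit (isUnit_of_dvd_one this)
  refine Polynomial.irreducible_of_eisenstein_criterion hprime ?_ ?_ ?_ ?_ hmon.isPrimitive
  · rw [hmon.leadingCoeff]
    exact fun h => hprime.ne_top ((Ideal.eq_top_iff_one _).mpr h)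
  · intro n hn
    rw [Polynomial.degree_eq_natDegree hmon.ne_zero, hdeg] at hn
    have hn : n < 4 := by exact_mod_cast hn
    rw [Ideal.mem_span_singleton]
    obtain ⟨c, rfl⟩ := hpd
    interval_cases n <;> simp only [hf, coeff_add, coeff_X_pow, coeff_C_mul, coeff_X, coeff_C] <;>
      norm_num
    · exact ⟨c * (4 - 3 * (p * c)), by ring⟩
    · exact ⟨16 * k * c, by ring⟩
    · exact ⟨6 * c, by ring⟩
  · rw [Polynomial.degree_eq_natDegree hmon.ne_zero, hdeg]
    norm_num
  -- `p² ∤ d` as `d` is squarefree, and `p ∤ 4 - 3d` as `p` is odd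
  · have : f.coeff 0 = d * (4 - 3 * d) := by simp [hf]
    rw [this, Ideal.span_singleton_pow, Ideal.mem_span_singleton]
    obtain ⟨c, rfl⟩ := hpd
    intro h
    rw [pow_two, mul_assoc, mul_dvd_mul_iff_left hp.ne_zero] at h
    rcases hp.dvd_or_dvd h with h | h
    · obtain ⟨e, rfl⟩ := h
      exact hp.not_isUnit (hd p ⟨e, by ring⟩)
    · apply hp4
      have := dvd_add h (dvd_mul_right p (3 * c))
      rwa [show 4 - 3 * (p * c) + p * (3 * c) = 4 by ring] at this

/-- The simplest quartic polynomial is invariant under `x ↦ (x - 1) / (x + 1)`, which therefore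
induces an endomorphism of `K = ℚ(θ)`. -/
lemma exists_automorphism {K : Type*} [Field K] [CharZero K] [Algebra ℚ K] {k : ℤ} (hk : k ≠ 0)
    (hd : Squarefree (4 * k ^ 2 + 1)) (θ : K)
    (hθ : θ ^ 4 - 8 * k * θ ^ 3 - 6 * θ ^ 2 + 8 * k * θ + 1 = 0)
    (htop : Algebra.adjoin ℚ {θ} = ⊤) :
    ∃ σ : K →ₐ[ℚ] K, σ θ = (θ - 1) / (θ + 1) := by
  set d : ℤ := 4 * k ^ 2 + 1 with hdk
  have hdk' : (d : K) = 4 * k ^ 2 + 1 := by rw [hdk]; push_cast; ring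
  set f : ℤ[X] := X ^ 4 + C (-6 * d) * X ^ 2 + C (-16 * k * d) * X + C (d * (4 - 3 * d)) with hf
  have hmon : f.Monic := by rw [hf]; monicity!
  have hirr : Irreducible (f.map (Int.castRingHom ℚ)) :=
    (IsPrimitive.Int.irreducible_iff_irreducible_map_cast hmon.isPrimitive).mp
      (irreducible_shifted hdk hk hd)
  have hev : ∀ z : K, aeval z (f.map (Int.castRingHom ℚ)) =
      z ^ 4 - 6 * d * z ^ 2 - 16 * k * d * z + d * (4 - 3 * d) := by
    intro z
    simp only [hf, Polynomial.map_add, Polynomial.map_mul, Polynomial.map_pow, Polynomial.map_X,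
      Polynomial.map_C, map_add, map_mul, map_pow, aeval_X, aeval_C]
    simp only [eq_intCast, map_intCast]
    push_cast
    ring
  have hy : aeval (θ - 2 * k) (f.map (Int.castRingHom ℚ)) = 0 := by
    rw [hev, hdk']
    linear_combination hθ
  have hmin : minpoly ℚ (θ - 2 * k) = f.map (Int.castRingHom ℚ) :=
    (minpoly.eq_of_irreducible_of_monic hirr hy (hmon.map _)).symm
  have hint : IsIntegral ℚ (θ - 2 * k) := ⟨_, hmon.map _, by simpa [aeval_def] using hy⟩
  have htop' : Algebra.adjoin ℚ {θ - 2 * k} = ⊤ := by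
    rw [eq_top_iff, ← htop]
    refine Algebra.adjoin_le ?_
    rw [Set.singleton_subset_iff]
    have h1 : (θ - 2 * k) ∈ Algebra.adjoin ℚ {θ - 2 * (k : K)} := Algebra.self_mem_adjoin_singleton _ _
    have h2 : (2 * k : K) ∈ Algebra.adjoin ℚ {θ - 2 * (k : K)} := by
      have := Subalgebra.algebraMap_mem (Algebra.adjoin ℚ {θ - 2 * (k : K)}) (2 * k : ℚ)
      simpa using this
    have := add_mem h1 h2
    simpa using this
  have hθ1 : θ + 1 ≠ 0 := by
    intro h
    obtain rfl : θ = -1 := by linear_combination h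
    ring_nf at hθ
    norm_num at hθ
  let pb := PowerBasis.ofAdjoinEqTop hint htop'
  have hgen : pb.gen = θ - 2 * k := PowerBasis.ofAdjoinEqTop_gen hint htop'
  have hroot : aeval ((θ - 1) / (θ + 1) - 2 * k) (minpoly ℚ pb.gen) = 0 := by
    rw [hgen, hmin, hev, hdk']
    field_simp
    linear_combination (-4) * hθ
  refine ⟨pb.lift _ hroot, ?_⟩
  have h := pb.lift_gen _ hroot
  rw [hgen, map_sub, map_mul, map_intCast, map_ofNat] at h
  linear_combination h

/-! ### The order `ℤ[θ]` and its index -/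

/-- The order `ℤ[θ]` in the coordinates given by `1, θ - 2k, 2s, 2sα`. -/
lemma mem_adjoin_iff_s12 {K : Type*} [Field K] [NumberField K] {d k : ℤ} (hdk : d = 4 * k ^ 2 + 1)
    (θ : 𝓞 K) (s α : K) (hs : s ^ 2 = d) (hα : α ^ 2 = 2 * d + 4 * k * s)
    (hθ : algebraMap (𝓞 K) K θ = 2 * k + s + α) (x : 𝓞 K) :
    x ∈ Algebra.adjoin ℤ {θ} ↔
      ∃ a c e f : ℤ, algebraMap (𝓞 K) K x = a + c * (s + α) + 2 * e * s + 2 * f * (s * α) := by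
  have hdk' : (d : K) = 4 * k ^ 2 + 1 := by rw [hdk]; push_cast; ring
  constructor
  · intro hx
    induction hx using Algebra.adjoin_induction with
    | mem x hx =>
      obtain rfl := hx
      exact ⟨2 * k, 1, 0, 0, by rw [hθ]; push_cast; ring⟩
    | algebraMap c => exact ⟨c, 0, 0, 0, by simp⟩
    | add x y _ _ hx hy =>
      obtain ⟨a, c, e, f, hx⟩ := hx
      obtain ⟨a', c', e', f', hy⟩ := hy
      exact ⟨a + a', c + c', e + e', f + f', by rw [map_add, hx, hy]; push_cast; ring⟩
    | mul x y _ _ hx hy =>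
      obtain ⟨a, c, e, f, hx⟩ := hx
      obtain ⟨a', c', e', f', hy⟩ := hy
      -- the `α`-coefficient of the product
      set c₁ : ℤ := a * c' + c * a' + 2 * d * ((c + 2 * e) * f' + f * (c' + 2 * e')) with hc₁
      refine ⟨a * a' + d * ((c + 2 * e) * (c' + 2 * e')) + 2 * d * (c * c' + 4 * d * f * f')
          + 4 * k * d * (2 * c * f' + 2 * f * c'), c₁,
        a * e' + e * a' + 2 * k * (c * c' + 4 * d * f * f') + 2 * d * (c * f' + f * c')
          - d * ((c + 2 * e) * f' + f * (c' + 2 * e')),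
        a * f' + f * a' + c * c' + c * e' + e * c', ?_⟩
      rw [map_mul, hx, hy, hc₁]
      push_cast
      linear_combination ((c : K) + 2 * f * s) * (c' + 2 * f' * s) * hα +
        (((c : K) + 2 * e) * (c' + 2 * e') + α * ((c + 2 * e) * (2 * f') + 2 * f * (c' + 2 * e')) +
        8 * d * f * f' + 4 * k * (2 * c * f' + 2 * f * c') + 16 * k * f * f' * s) * hs
  · rintro ⟨a, c, e, f, hx⟩
    have hy : θ - 2 * k ∈ Algebra.adjoin ℤ {θ} :=
      sub_mem (Algebra.self_mem_adjoin_singleton _ _)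
        (mul_mem (ofNat_mem _ 2) (intCast_mem _ k))
    set y : 𝓞 K := θ - 2 * k with hy'
    have hyK : algebraMap (𝓞 K) K y = s + α := by
      rw [hy', map_sub, map_mul, hθ, map_intCast, map_ofNat]
      ring
    have hi : ∀ n : ℤ, (n : 𝓞 K) ∈ Algebra.adjoin ℤ {θ} := fun n => intCast_mem _ n
    -- with `y = θ - 2k = s + α`: `y³ - 2k y² - 5d y - 6kd = 2s` and `y² - 3d = 4ks + 2sα`
    have hxy : x = (a : ℤ) + (c : ℤ) * y
        + (e - 2 * k * f : ℤ) * (y ^ 3 - (2 * k : ℤ) * y ^ 2 - (5 * d : ℤ) * y - (6 * k * d : ℤ))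
        + (f : ℤ) * (y ^ 2 - (3 * d : ℤ)) := by
      apply RingOfIntegers.coe_injective
      rw [hx]
      simp only [map_add, map_mul, map_sub, map_pow, hyK, map_intCast]
      push_cast
      have hα3 : (s + α) ^ 2 = 3 * d + 4 * k * s + 2 * s * α := by
        linear_combination hs + hα
      have hα4 : (s + α) ^ 3 = 12 * k * d + 7 * d * s + 5 * d * α + 4 * k * s * α := by
        linear_combination (s + α) * hα3 + 2 * s * hα + (4 * k + 2 * α + 4 * k * 2) * hs
      linear_combination -(e - 2 * k * f : K) * hα4 + (2 * k * (e - 2 * k * f) - f : K) * hα3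
        - 2 * (e - 2 * k * f : K) * s * hdk'
    rw [hxy]
    exact add_mem (add_mem (add_mem (hi _) (mul_mem (hi _) hy))
      (mul_mem (hi _) (sub_mem (sub_mem (sub_mem (pow_mem hy 3) (mul_mem (hi _) (pow_mem hy 2)))
        (mul_mem (hi _) hy)) (hi _)))) (mul_mem (hi _) (sub_mem (pow_mem hy 2) (hi _)))

theorem stmt_12 (m : ℤ) (hm : 1 ≤ m) (hv : 3 ≤ padicValInt 2 m)
    (hsf : Squarefree (oddPart ((m ^ 2 + 16).natAbs)))
    (K : Type) [Field K] [NumberField K] (θ : 𝓞 K)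
    (hθ : Polynomial.aeval (θ : K) (Pm m) = 0)
    (hgen : IntermediateField.adjoin ℚ {(θ : K)} = ⊤) :
    orderIndex K θ = 16 := by
  obtain ⟨k, rfl⟩ : (8 : ℤ) ∣ m := by
    have := (padicValInt_dvd_iff (p := 2) 3 m).mpr (Or.inr hv)
    simpa using this
  have hk : k ≠ 0 := by rintro rfl; norm_num at hm
  have hd := squarefree_of_oddPart hsf
  obtain ⟨d, hdk⟩ : ∃ d : ℤ, d = 4 * k ^ 2 + 1 := ⟨_, rfl⟩
  have hdk' : (d : K) = 4 * k ^ 2 + 1 := by rw [hdk]; push_cast; ring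
  set t : K := algebraMap (𝓞 K) K θ with ht
  have hP : t ^ 4 - 8 * k * t ^ 3 - 6 * t ^ 2 + 8 * k * t + 1 = 0 := by
    have h6 : aeval t (6 : ℚ[X]) = 6 := map_ofNat _ 6
    simpa [Pm, ← ht, h6] using hθ
  have htop : Algebra.adjoin ℚ {t} = ⊤ := by
    rw [← IntermediateField.adjoin_simple_toSubalgebra_of_isAlgebraic
      (Algebra.IsAlgebraic.isAlgebraic t), hgen, IntermediateField.top_toSubalgebra]
  obtain ⟨σ, hσt⟩ := exists_automorphism hk hd t hP htop
  rw [← hdk] at hd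
  -- `P` takes the values `1, -4, -4` at `0, -1, 1`
  have ht0 : t ≠ 0 := by
    intro h
    rw [h] at hP
    norm_num at hP
  have ht1 : t + 1 ≠ 0 := by
    intro h
    have h1 : t = -1 := by linear_combination h
    rw [h1] at hP
    ring_nf at hP
    norm_num at hP
  have ht2 : t - 1 ≠ 0 := by
    intro h
    have h1 : t = 1 := by linear_combination h
    rw [h1] at hP
    ring_nf at hP
    norm_num at hP
  -- `2s = θ - θ⁻¹ - 4k`, where `s` is a square root of `d`
  obtain ⟨s, hs_def⟩ : ∃ s : K, s = (t - t⁻¹ - 4 * k) / 2 := ⟨_, rfl⟩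
  have hs : s ^ 2 = d := by
    rw [hs_def, hdk']
    field_simp
    linear_combination hP
  have hσs : σ s = -s := by
    rw [hs_def]
    simp only [map_div₀, map_sub, map_mul, map_inv₀, hσt, map_intCast, map_ofNat]
    field_simp
    linear_combination hP
  obtain ⟨α, hα_def⟩ : ∃ α : K, α = t - 2 * k - s := ⟨_, rfl⟩
  have hα : α ^ 2 = 2 * d + 4 * k * s := by
    rw [hα_def, hs_def, hdk']
    field_simp
    linear_combination hP
  -- `σ ∘ σ` sends `θ` to `-θ⁻¹`; it is the nontrivial automorphism over `ℚ(√d)`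
  have hτt : σ (σ t) = -t⁻¹ := by
    rw [hσt]
    simp only [map_div₀, map_sub, map_add, map_one, hσt]
    have h1 : (t - 1) / (t + 1) - 1 = -2 / (t + 1) := by field_simp; ring
    have h2 : (t - 1) / (t + 1) + 1 = 2 * t / (t + 1) := by field_simp; ring
    rw [h1, h2]
    field_simp
  have hτα : σ (σ α) = -α := by
    rw [hα_def]
    simp only [map_sub, map_mul, map_intCast, map_ofNat, hσs, hτt, map_neg]
    linear_combination -2 * hs_def
  have hd0 : (d : K) ≠ 0 := by exact_mod_cast hd.ne_zero
  have hs0 : s ≠ 0 := by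
    rintro rfl
    exact hd0 (by rw [← hs]; ring)
  have hα0 : α ≠ 0 := by
    intro h
    have h1 : (s - 2 * k) * α ^ 2 = 2 * s := by
      rw [hα]
      linear_combination (4 * k : K) * hs + 2 * s * hdk'
    rw [h] at h1
    apply hs0
    linear_combination (-1 / 2 : K) * h1
  have hθ' : algebraMap (𝓞 K) K θ = 2 * k + s + α := by rw [hα_def]; ring
  have hcoord : ∀ x : 𝓞 K, ∃ A B C D : ℤ, 2 * algebraMap (𝓞 K) K x = A + B * s + (C + D * s) * α ∧
      2 ∣ A - B ∧ 2 ∣ C - D := by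
    intro x
    obtain ⟨p, q, r, u, hx⟩ := exists_coordinates hs hα hθ' htop (algebraMap (𝓞 K) K x)
    obtain ⟨A, B, C, D, hA, hB, hC, hD, h1, h2⟩ := integral_coordinates hdk hd s α σ hs hα hσs hτα
      p q r u (hx ▸ RingOfIntegers.isIntegral_coe x)
    refine ⟨A, B, C, D, ?_, h1, h2⟩
    have hA' := congrArg (Rat.cast : ℚ → K) hA
    have hB' := congrArg (Rat.cast : ℚ → K) hB
    have hC' := congrArg (Rat.cast : ℚ → K) hC
    have hD' := congrArg (Rat.cast : ℚ → K) hD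
    push_cast at hA' hB' hC' hD'
    rw [hx, ← hA', ← hB', ← hC', ← hD']
    ring
  choose A B C D hx hAB hCD using hcoord
  have huniq : ∀ a b c e a' b' c' e' : ℤ,
      (a + b * s + (c + e * s) * α : K) = a' + b' * s + (c' + e' * s) * α →
      a = a' ∧ b = b' ∧ c = c' ∧ e = e' := by
    intro a b c e a' b' c' e' h
    obtain ⟨h1, h2, h3, h4⟩ := coordinates_eq_zero σ hs0 hα0 hσs hτα
      (a - a') (b - b') (c - c') (e - e') (by push_cast; linear_combination h)
    refine ⟨?_, ?_, ?_, ?_⟩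
    · exact_mod_cast sub_eq_zero.mp h1
    · exact_mod_cast sub_eq_zero.mp h2
    · exact_mod_cast sub_eq_zero.mp h3
    · exact_mod_cast sub_eq_zero.mp h4
  -- for `x = (A + B s)/2 + (C + D s)/2 · α`, the pair `(B - C, D)` modulo 4
  let φ : 𝓞 K →+ ZMod 4 × ZMod 4 := AddMonoidHom.mk'
    (fun x => (((B x - C x : ℤ) : ZMod 4), ((D x : ℤ) : ZMod 4))) (by
      intro x y
      obtain ⟨-, h2, h3, h4⟩ := huniq (A (x + y)) (B (x + y)) (C (x + y)) (D (x + y))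
        (A x + A y) (B x + B y) (C x + C y) (D x + D y) (by
          rw [← hx (x + y), map_add, mul_add, hx x, hx y]; push_cast; ring)
      simp only [h2, h3, h4, Prod.mk_add_mk]
      push_cast
      ext <;> simp <;> ring)
  have hφ : ∀ x, φ x = (((B x - C x : ℤ) : ZMod 4), ((D x : ℤ) : ZMod 4)) := fun x => rfl
  have hker : (Algebra.adjoin ℤ {θ}).toSubring.toAddSubgroup = φ.ker := by
    ext x
    have hφ0 : φ x = 0 ↔ (4 : ℤ) ∣ B x - C x ∧ (4 : ℤ) ∣ D x := by
      rw [hφ, Prod.mk_eq_zero, ZMod.intCast_zmod_eq_zero_iff_dvd, ZMod.intCast_zmod_eq_zero_iff_dvd]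
      norm_num
    rw [AddMonoidHom.mem_ker, hφ0]
    change x ∈ Algebra.adjoin ℤ {θ} ↔ _
    rw [mem_adjoin_iff_s12 hdk θ s α hs hα hθ']
    constructor
    · rintro ⟨a, c, e, f, h⟩
      obtain ⟨-, h2, h3, h4⟩ := huniq (A x) (B x) (C x) (D x)
        (2 * a) (2 * (c + 2 * e)) (2 * c) (4 * f) (by
          rw [← hx x, h]; push_cast; ring)
      rw [h2, h3, h4]
      exact ⟨⟨e, by ring⟩, ⟨f, by ring⟩⟩
    -- `4 ∣ D` makes `C` even, then `B` and `A` are even too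
    · rintro ⟨⟨e, he⟩, ⟨f, hf⟩⟩
      obtain ⟨c, hc⟩ : (2 : ℤ) ∣ C x := by have := hCD x; omega
      obtain ⟨a, ha⟩ : (2 : ℤ) ∣ A x := by have := hAB x; omega
      have hb : B x = 2 * (c + 2 * e) := by omega
      refine ⟨a, c, e, f, ?_⟩
      have h := hx x
      rw [ha, hb, hc, hf] at h
      push_cast at h
      linear_combination (1 / 2 : K) * h
  have hsurj : Function.Surjective φ := by
    have hω : IsIntegral ℤ ((1 + s) / 2) := by
      have hmon : (X ^ 2 - X - Polynomial.C (k ^ 2) : ℤ[X]).Monic := by monicity!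
      refine ⟨_, hmon, ?_⟩
      rw [← aeval_def]
      simp only [map_sub, map_pow, aeval_X, eq_intCast, map_intCast]
      linear_combination (1 / 4 : K) * hs + (1 / 4 : K) * hdk'
    have hαi : IsIntegral ℤ α := by
      have h1 : IsIntegral ℤ (2 * k + s : K) := by
        have e : (2 * k + s : K) = ((2 * k - 1 : ℤ) : K) + ((2 : ℤ) : K) * ((1 + s) / 2) := by
          push_cast; ring
        rw [e]
        exact (isIntegral_algebraMap (A := K) (x := (2 * k - 1 : ℤ))).add
          ((isIntegral_algebraMap (A := K) (x := (2 : ℤ))).mul hω)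
      have e : α = t - (2 * k + s) := by rw [hα_def]; ring
      rw [e]
      exact (RingOfIntegers.isIntegral_coe θ).sub h1
    rintro ⟨u, v⟩
    obtain ⟨u, rfl⟩ := ZMod.intCast_surjective u
    obtain ⟨v, rfl⟩ := ZMod.intCast_surjective v
    have hz : IsIntegral ℤ (((u + v : ℤ) : K) * ((1 + s) / 2) + (v : K) * ((1 + s) / 2) * α) :=
      ((isIntegral_algebraMap (A := K) (x := u + v)).mul hω).add
        (((isIntegral_algebraMap (A := K) (x := v)).mul hω).mul hαi)
    -- with `ω = (1 + s) / 2`, the element `(u + v) ω + v ω α` maps to `(u, v)`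
    let z : 𝓞 K := ⟨_, hz⟩
    have hzK : algebraMap (𝓞 K) K z =
      ((u + v : ℤ) : K) * ((1 + s) / 2) + (v : K) * ((1 + s) / 2) * α := rfl
    obtain ⟨-, h2, h3, h4⟩ := huniq (A z) (B z) (C z) (D z) (u + v) (u + v) v v (by
      rw [← hx z, hzK]; push_cast; ring)
    refine ⟨z, ?_⟩
    rw [hφ, h2, h3, h4]
    simp
  rw [orderIndex, hker, AddSubgroup.index_ker, AddMonoidHom.range_eq_top.mpr hsurj]
  rw [Nat.card_congr AddSubgroup.topEquiv.toEquiv, Nat.card_prod, Nat.card_zmod]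
end
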